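/- arXiv:2508.16452 — 2 statements merged into one kernel-verified Lean document; each statement's English description precedes it below -/
import Mathlib

section
/- Let f be an increasing function ℕ → ℕ. There exists a finitely generated, torsion-free, 3-step solvable, conjugacy separable group G (a quotient of Hall's group) such that rf_G(n) ≥ f(n) for all sufficiently large n; moreover if f is computable then G can be taken to be recursively presented. -/
/-- Generators of Hall's group `G₀`: the shift `t`, and `a i`, `c i` for `i : ℤ`. -/
inductive Gen where
  | t : Gen
  | a : ℤ → Gen
  | c : ℤ → Gen

/-- The commutator convention of the paper: `[x, y] = x⁻¹y⁻¹xy`. -/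
def pcomm {G : Type*} [Group G] (x y : G) : G := x⁻¹ * y⁻¹ * x * y

/-- The relations of Hall's group `G₀`. -/
def hallRels : Set (FreeGroup Gen) :=
  (Set.range fun i : ℤ =>
    FreeGroup.of Gen.t * FreeGroup.of (Gen.a i) * (FreeGroup.of Gen.t)⁻¹ *
      (FreeGroup.of (Gen.a (i + 1)))⁻¹) ∪
  (Set.range fun i : ℤ =>
    FreeGroup.of Gen.t * FreeGroup.of (Gen.c i) * (FreeGroup.of Gen.t)⁻¹ *
      (FreeGroup.of (Gen.c i))⁻¹) ∪
  (Set.range fun p : ℤ × ℤ =>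
    pcomm (FreeGroup.of (Gen.a p.1)) (FreeGroup.of (Gen.a p.2)) *
      (FreeGroup.of (Gen.c (p.1 - p.2)))⁻¹) ∪
  (Set.range fun p : ℤ × ℤ =>
    pcomm (FreeGroup.of (Gen.c p.1)) (FreeGroup.of (Gen.a p.2))) ∪
  (Set.range fun p : ℤ × ℤ =>
    pcomm (FreeGroup.of (Gen.c p.1)) (FreeGroup.of (Gen.c p.2)))

/-- Hall's group `G₀`. -/
abbrev G₀ := PresentedGroup hallRels

/-- `g` has word norm at most `n` with respect to the generating set `S`. -/
def WordNormLe {G : Type*} [Group G] (S : Set G) (g : G) (n : ℕ) : Prop :=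
  ∃ L : List G, L.length ≤ n ∧ (∀ x ∈ L, x ∈ S ∨ x⁻¹ ∈ S) ∧ L.prod = g

/-- `G` is conjugacy separable: any two non-conjugate elements stay non-conjugate in
some finite quotient (`h g₁ h⁻¹` and `g₂` have the same image in `G ⧸ N` iff
`h g₁ h⁻¹ g₂⁻¹ ∈ N`). -/
def ConjSep (G : Type*) [Group G] : Prop :=
  ∀ g₁ g₂ : G, ¬ IsConj g₁ g₂ →
    ∃ N : Subgroup G, N.Normal ∧ N.FiniteIndex ∧ ∀ h : G, h * g₁ * h⁻¹ * g₂⁻¹ ∉ N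

/-- `G` is recursively presented: it is isomorphic to a group presented on finitely many
generators with a computably enumerable set of relations. -/
def RecursivelyPresented (G : Type*) [Group G] : Prop :=
  ∃ (k : ℕ) (L : ℕ → List (Fin k × Bool)), Computable L ∧
    Nonempty (G ≃* PresentedGroup (Set.range fun m => FreeGroup.mk (L m)))

/-- The conclusion of Statement 11 for the group `G`. -/
def GoodGroup (f : ℕ → ℕ) (G : Type) [Group G] : Prop :=
  ∃ (S : Finset G) (π : G₀ →* G),
    Function.Surjective π ∧
    Subgroup.closure (S : Set G) = ⊤ ∧
    (∀ g : G, g ≠ 1 → ¬ IsOfFinOrder g) ∧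
    derivedSeries G 3 = ⊥ ∧
    ConjSep G ∧
    (∃ N₁ : ℕ, ∀ n ≥ N₁, ∃ g : G, g ≠ 1 ∧ WordNormLe (S : Set G) g n ∧
      ∀ K : Subgroup G, K.Normal → K.FiniteIndex → g ∉ K → f n ≤ K.index)

/-!
`G` is an extension of `ℤ ≀ ℤ = ⟨t, a⟩` by a free abelian central subgroup with basis
`e 0, e 1, …`, in which the commutator `c j` of the translate of `a` by `t ^ j` with `a` equals
`κ j - κ (-j)` for a prescribed kernel `κ`. Take the `u`-th coordinate of `κ` to be the indicator
function of the residue class of `2 ^ u` modulo `2 ^ (u + ρ u + 3)`. Then `c (2 ^ u) = e u` has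
length `O(2 ^ u)`, whereas `c` vanishes at `2 ^ u` plus any odd multiple of half the period. In a
finite quotient of order less than `ρ u` some such odd multiple is divisible by the order, so
`c (2 ^ u)` dies there. With `ρ u ≥ f (8 * 2 ^ u + 4)` this forces `rf_G ≥ f` eventually.

Conjugacy separability holds because each coordinate of `κ` is periodic, so that `G` has enough
finite quotients retaining finitely many coordinates, while for every `v` in the base of the wreath
product and all but finitely many `u` the commutators with `v` contain `v j • e u` for every `j`.

Since `c j` is an explicit power of `c (2 ^ v)`, where `2 ^ v` is the exact power of `2` dividing
`j ≠ 0`, these power relations and the centrality of the `c j` present `G` on `t` and `a`.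
-/

section Groups

variable {G H : Type*} [Group G] [Group H]

lemma pcomm_eq_one_iff {x y : G} : pcomm x y = 1 ↔ Commute x y := by
  rw [pcomm, mul_assoc, ← mul_inv_rev, inv_mul_eq_one, eq_comm, commute_iff_eq]

lemma map_pcomm (φ : G →* H) (x y : G) : φ (pcomm x y) = pcomm (φ x) (φ y) := by
  simp only [pcomm, map_mul, map_inv]

lemma surjective_of_closure_eq_top {φ : G →* H} {s : Set H} (hs : Subgroup.closure s = ⊤)
    (h : s ⊆ Set.range φ) : Function.Surjective φ := by
  rwa [← MonoidHom.range_eq_top, eq_top_iff, ← hs, Subgroup.closure_le]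

lemma zpow_mul_eq_of_mul_eq {g h z : G} (hz : Commute h z) (hgh : h * g = g * h * z) (n : ℤ) :
    h ^ n * g = g * h ^ n * z ^ n := by
  have hconj : g⁻¹ * h * g⁻¹⁻¹ = h * z := by
    rw [inv_inv, mul_assoc, hgh, mul_assoc, inv_mul_cancel_left]
  have hpow : g⁻¹ * h ^ n * g⁻¹⁻¹ = h ^ n * z ^ n := by
    rw [← conj_zpow, hconj, hz.mul_zpow]
  rw [mul_assoc, ← hpow, inv_inv, mul_assoc, mul_inv_cancel_left]

open scoped IsMulCommutative in
lemma exists_hom_of_commute {ι : Type*} (α : ι → G) (h : ∀ i j, Commute (α i) (α j)) :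
    ∃ μ : Multiplicative (ι →₀ ℤ) →* G, ∀ i s, μ (.ofAdd (Finsupp.single i s)) = α i ^ s := by
  have := Subgroup.isMulCommutative_closure (k := Set.range α) (by
    rintro _ ⟨i, rfl⟩ _ ⟨j, rfl⟩
    exact h i j)
  let β : ι → Additive (Subgroup.closure (Set.range α)) := fun i =>
    .ofMul ⟨α i, Subgroup.subset_closure ⟨i, rfl⟩⟩
  let ν : (ι →₀ ℤ) →+ Additive (Subgroup.closure (Set.range α)) :=
    Finsupp.liftAddHom fun i => zmultiplesHom _ (β i)
  refine ⟨(Subgroup.closure (Set.range α)).subtype.comp (AddMonoidHom.toMultiplicativeLeft ν),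
    fun i s => ?_⟩
  have hν : ν (Finsupp.single i s) = s • β i := by simp [ν]
  exact congrArg (fun x => (x.toMul : G)) hν

end Groups

namespace WordNormLe

variable {G : Type*} [Group G] {S : Set G} {x y : G} {m n : ℕ}

lemma of_mem (hx : x ∈ S) : WordNormLe S x 1 :=
  ⟨[x], by simp [hx]⟩

lemma mono (hx : WordNormLe S x m) (hmn : m ≤ n) : WordNormLe S x n :=
  let ⟨L, hL, hLS, hLx⟩ := hx
  ⟨L, hL.trans hmn, hLS, hLx⟩

lemma mul (hx : WordNormLe S x m) (hy : WordNormLe S y n) : WordNormLe S (x * y) (m + n) := by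
  obtain ⟨L, hL, hLS, rfl⟩ := hx
  obtain ⟨M, hM, hMS, rfl⟩ := hy
  refine ⟨L ++ M, by rw [List.length_append]; omega, fun z hz => ?_, List.prod_append⟩
  exact (List.mem_append.1 hz).elim (hLS z) (hMS z)

lemma inv (hx : WordNormLe S x n) : WordNormLe S x⁻¹ n := by
  obtain ⟨L, hL, hLS, rfl⟩ := hx
  refine ⟨(L.map (·⁻¹)).reverse, by simpa using hL, fun z hz => ?_, (List.prod_inv_reverse L).symm⟩
  obtain ⟨y, hy, rfl⟩ := List.mem_map.1 (List.mem_reverse.1 hz)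
  rw [inv_inv]
  exact (hLS y hy).symm

lemma pow (hx : WordNormLe S x m) (n : ℕ) : WordNormLe S (x ^ n) (n * m) := by
  induction n with
  | zero => exact ⟨[], by simp⟩
  | succ n ih =>
    rw [pow_succ, Nat.succ_mul]
    exact ih.mul hx

lemma pcomm (hx : WordNormLe S x m) (hy : WordNormLe S y n) :
    WordNormLe S (pcomm x y) (m + n + m + n) :=
  ((hx.inv.mul hy.inv).mul hx).mul hy

end WordNormLe

section ConjSeparated

variable {G : Type*} [Group G]

/-- Some finite quotient of `G` separates the conjugacy class of `g₁` from `g₂`; conjugacy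
separability is this property for all non-conjugate pairs. -/
def ConjSeparated (g₁ g₂ : G) : Prop :=
  ∃ N : Subgroup G, N.Normal ∧ N.FiniteIndex ∧ ∀ h : G, h * g₁ * h⁻¹ * g₂⁻¹ ∉ N

lemma conjSeparated_of_hom {g₁ g₂ : G} {H : Type*} [Group H] [Finite H] (φ : G →* H)
    (h : ∀ x : H, x * φ g₁ ≠ φ g₂ * x) : ConjSeparated g₁ g₂ := by
  refine ⟨φ.ker, inferInstance, inferInstance, fun x hx => h (φ x) ?_⟩
  rwa [MonoidHom.mem_ker, map_mul, map_inv, mul_inv_eq_one, map_mul, map_mul, map_inv,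
    mul_inv_eq_iff_eq_mul] at hx

lemma ConjSeparated.of_conj {g₁ g₂ x : G} (h : ConjSeparated (x * g₁ * x⁻¹) g₂) :
    ConjSeparated g₁ g₂ := by
  obtain ⟨N, hN, hfin, hsep⟩ := h
  refine ⟨N, hN, hfin, fun y hy => hsep (y * x⁻¹) ?_⟩
  simpa only [mul_assoc, inv_mul_cancel_left, mul_inv_rev, inv_inv] using hy

end ConjSeparated

/-- A biadditive form on `V` with values in `A`, invariant under an action of `T` on `V`. -/
structure InvariantCocycle (V A T : Type*) [AddCommGroup V] [AddCommGroup A] [AddCommGroup T] where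
  /-- the action of `T` on `V` -/
  act : T → V →+ V
  act_zero : ∀ v, act 0 v = v
  act_add : ∀ k l v, act (k + l) v = act k (act l v)
  /-- the biadditive form, used as a `2`-cocycle -/
  form : V →+ V →+ A
  form_act : ∀ k v w, form (act k v) (act k w) = form v w

/-- The group `N ⋊ T`, where `1 → A → N → V → 1` is the central extension with cocycle `D.form`
and `T` acts on `N` through its action on `V`. -/
@[ext] structure CentralExtension {V A T : Type*} [AddCommGroup V] [AddCommGroup A]
    [AddCommGroup T] (D : InvariantCocycle V A T) where
  /-- the component in `V` -/
  vec : V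
  /-- the component in `A` -/
  cen : A
  /-- the component in `T` -/
  deg : T

namespace CentralExtension

variable {V A T : Type*} [AddCommGroup V] [AddCommGroup A] [AddCommGroup T]
  {D : InvariantCocycle V A T}

instance : Mul (CentralExtension D) where
  mul g h := ⟨g.vec + D.act g.deg h.vec, g.cen + h.cen + D.form g.vec (D.act g.deg h.vec),
    g.deg + h.deg⟩

instance : One (CentralExtension D) where
  one := ⟨0, 0, 0⟩

instance : Inv (CentralExtension D) where
  inv g := ⟨-D.act (-g.deg) g.vec, -g.cen + D.form g.vec g.vec, -g.deg⟩

section Coordinates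

variable (g h : CentralExtension D)

@[simp] lemma vec_mul : (g * h).vec = g.vec + D.act g.deg h.vec := rfl
@[simp] lemma cen_mul :
    (g * h).cen = g.cen + h.cen + D.form g.vec (D.act g.deg h.vec) := rfl
@[simp] lemma deg_mul : (g * h).deg = g.deg + h.deg := rfl
@[simp] lemma vec_one : (1 : CentralExtension D).vec = 0 := rfl
@[simp] lemma cen_one : (1 : CentralExtension D).cen = 0 := rfl
@[simp] lemma deg_one : (1 : CentralExtension D).deg = 0 := rfl
@[simp] lemma vec_inv : g⁻¹.vec = -D.act (-g.deg) g.vec := rfl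
@[simp] lemma cen_inv : g⁻¹.cen = -g.cen + D.form g.vec g.vec := rfl
@[simp] lemma deg_inv : g⁻¹.deg = -g.deg := rfl

end Coordinates

instance : Group (CentralExtension D) :=
  Group.ofLeftAxioms
    (fun g h k => by
      ext
      · simp [D.act_add, add_assoc]
      · simp only [cen_mul, vec_mul, deg_mul, map_add, D.act_add, D.form_act,
          AddMonoidHom.add_apply]
        abel
      · simp [add_assoc])
    (fun g => by ext <;> simp [D.act_zero])
    (fun g => by
      ext
      · simp
      · simp [D.form_act]
      · simp)

instance [Finite V] [Finite A] [Finite T] : Finite (CentralExtension D) :=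
  Finite.of_injective (fun g => (g.vec, g.cen, g.deg)) fun g h hgh => by
    simpa only [CentralExtension.ext_iff, Prod.mk.injEq] using hgh

/-- The projection onto `T`. -/
def degHom (D : InvariantCocycle V A T) : CentralExtension D →* Multiplicative T where
  toFun g := .ofAdd g.deg
  map_one' := rfl
  map_mul' _ _ := rfl

@[simp] lemma deg_pow (g : CentralExtension D) (n : ℕ) : (g ^ n).deg = n • g.deg :=
  congrArg Multiplicative.toAdd (map_pow (degHom D) g n)

@[simp] lemma deg_zpow (g : CentralExtension D) (n : ℤ) : (g ^ n).deg = n • g.deg :=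
  congrArg Multiplicative.toAdd (map_zpow (degHom D) g n)

/-- The inclusion of the central subgroup `A`. -/
def ofCen (D : InvariantCocycle V A T) : Multiplicative A →* CentralExtension D where
  toFun z := ⟨0, z.toAdd, 0⟩
  map_one' := rfl
  map_mul' x y := by ext <;> simp

/-- The set-theoretic section of `V`; it is multiplicative up to `D.form`. -/
def ofVec (D : InvariantCocycle V A T) (v : V) : CentralExtension D := ⟨v, 0, 0⟩

/-- The inclusion of the complement `T`. -/
def ofDeg (D : InvariantCocycle V A T) : Multiplicative T →* CentralExtension D where
  toFun k := ⟨0, 0, k.toAdd⟩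
  map_one' := rfl
  map_mul' x y := by ext <;> simp

section Coordinates

variable (z : Multiplicative A) (v : V) (k : Multiplicative T)

@[simp] lemma vec_ofCen : (ofCen D z).vec = 0 := rfl
@[simp] lemma cen_ofCen : (ofCen D z).cen = z.toAdd := rfl
@[simp] lemma deg_ofCen : (ofCen D z).deg = 0 := rfl
@[simp] lemma vec_ofVec : (ofVec D v).vec = v := rfl
@[simp] lemma cen_ofVec : (ofVec D v).cen = 0 := rfl
@[simp] lemma deg_ofVec : (ofVec D v).deg = 0 := rfl
@[simp] lemma vec_ofDeg : (ofDeg D k).vec = 0 := rfl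
@[simp] lemma cen_ofDeg : (ofDeg D k).cen = 0 := rfl
@[simp] lemma deg_ofDeg : (ofDeg D k).deg = k.toAdd := rfl

end Coordinates

lemma ofCen_injective : Function.Injective (ofCen D) := fun _ _ h =>
  congrArg (fun g : CentralExtension D => Multiplicative.ofAdd g.cen) h

lemma commute_ofCen (z : Multiplicative A) (g : CentralExtension D) : Commute (ofCen D z) g := by
  ext <;> simp [D.act_zero, add_comm]

lemma exists_mul_ofCen_eq {g h : CentralExtension D} (hvec : g.vec = h.vec)
    (hdeg : g.deg = h.deg) : ∃ z, g = h * ofCen D z :=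
  ⟨.ofAdd (g.cen - h.cen), by ext <;> simp [hvec, hdeg, -ofAdd_sub]⟩

lemma eq_ofCen {g : CentralExtension D} (hvec : g.vec = 0) (hdeg : g.deg = 0) :
    g = ofCen D (.ofAdd g.cen) := by
  ext <;> simp [hvec, hdeg]

lemma ofVec_mul_ofCen_mul_ofDeg (g : CentralExtension D) :
    ofVec D g.vec * ofCen D (.ofAdd g.cen) * ofDeg D (.ofAdd g.deg) = g := by
  ext <;> simp

lemma ofVec_add (v w : V) :
    ofVec D (v + w) = ofVec D v * ofVec D w * ofCen D (.ofAdd (-D.form v w)) := by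
  ext <;> simp [D.act_zero]

lemma ofVec_neg (v : V) :
    ofVec D (-v) = (ofVec D v)⁻¹ * ofCen D (.ofAdd (-D.form v v)) := by
  ext <;> simp [D.act_zero]

lemma ofDeg_conj_ofVec (k : T) (v : V) :
    ofDeg D (.ofAdd k) * ofVec D v * (ofDeg D (.ofAdd k))⁻¹ = ofVec D (D.act k v) := by
  rw [mul_inv_eq_iff_eq_mul]
  ext <;> simp [D.act_zero]

lemma pcomm_ofVec (v w : V) :
    pcomm (ofVec D v) (ofVec D w) = ofCen D (.ofAdd (D.form v w - D.form w v)) := by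
  have h : ofVec D v * ofVec D w =
      ofVec D w * ofVec D v * ofCen D (.ofAdd (D.form v w - D.form w v)) := by
    ext <;> simp [D.act_zero, add_comm, -ofAdd_sub]
  rw [pcomm, mul_assoc, h]
  group

lemma eq_top_of_mem {K : Subgroup (CentralExtension D)} {s : Set V}
    (hs : AddSubgroup.closure s = ⊤) (hvec : ∀ v ∈ s, ofVec D v ∈ K)
    (hcen : ∀ z, ofCen D z ∈ K) (hdeg : ∀ k, ofDeg D k ∈ K) : K = ⊤ := by
  have key (v : V) : ofVec D v ∈ K := by
    have hv : v ∈ AddSubgroup.closure s := hs ▸ AddSubgroup.mem_top v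
    induction hv using AddSubgroup.closure_induction with
    | mem v hv => exact hvec v hv
    | zero => exact K.one_mem
    | add v w _ _ hv hw => exact ofVec_add (D := D) v w ▸ K.mul_mem (K.mul_mem hv hw) (hcen _)
    | neg v _ hv => exact ofVec_neg (D := D) v ▸ K.mul_mem (K.inv_mem hv) (hcen _)
  refine eq_top_iff.2 fun g _ => ?_
  rw [← ofVec_mul_ofCen_mul_ofDeg g]
  exact K.mul_mem (K.mul_mem (key _) (hcen _)) (hdeg _)

lemma vec_pow_of_deg_eq_zero {g : CentralExtension D} (hdeg : g.deg = 0) (n : ℕ) :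
    (g ^ n).vec = n • g.vec := by
  induction n with
  | zero => simp
  | succ n ih => rw [pow_succ', vec_mul, ih, hdeg, D.act_zero, add_comm, succ_nsmul]

lemma not_isOfFinOrder [IsAddTorsionFree V] [IsAddTorsionFree A] [IsAddTorsionFree T]
    {g : CentralExtension D} (hg : g ≠ 1) : ¬ IsOfFinOrder g := by
  intro hfin
  obtain ⟨n, hn, hgn⟩ := isOfFinOrder_iff_pow_eq_one.1 hfin
  have hdeg : g.deg = 0 := by
    rw [← nsmul_eq_zero_iff_right hn.ne', ← deg_pow, hgn, deg_one]
  have hvec : g.vec = 0 := by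
    rw [← nsmul_eq_zero_iff_right hn.ne', ← vec_pow_of_deg_eq_zero hdeg, hgn, vec_one]
  have hcen : g.cen = 0 := by
    rw [eq_ofCen hvec hdeg, ← map_pow] at hgn
    exact (nsmul_eq_zero_iff_right hn.ne').1 (congrArg cen hgn)
  exact hg (CentralExtension.ext hvec hcen hdeg)

lemma derivedSeries_three : derivedSeries (CentralExtension D) 3 = ⊥ := by
  have h₁ : derivedSeries (CentralExtension D) 1 ≤ (degHom D).ker := by
    rw [derivedSeries_one]
    exact Abelianization.commutator_subset_ker _
  have h₂ : derivedSeries (CentralExtension D) 2 ≤ (ofCen D).range := by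
    rw [derivedSeries_succ]
    refine (Subgroup.commutator_mono h₁ h₁).trans (Subgroup.commutator_le.2 ?_)
    intro x (hx : x.deg = 0) y (hy : y.deg = 0)
    refine ⟨_, (eq_ofCen ?_ ?_).symm⟩ <;> simp [commutatorElement_def, hx, hy, D.act_zero]
  rw [derivedSeries_succ, eq_bot_iff]
  refine (Subgroup.commutator_mono h₂ h₂).trans (Subgroup.commutator_le.2 ?_)
  rintro _ ⟨x, rfl⟩ y -
  exact commutatorElement_eq_one_iff_commute.2 (commute_ofCen x y)

/-- Functoriality of the construction in `(V, A, T)`. -/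
def map {V' A' T' : Type*} [AddCommGroup V'] [AddCommGroup A'] [AddCommGroup T']
    {D' : InvariantCocycle V' A' T'} (p : V →+ V') (φ : A →+ A') (τ : T →+ T')
    (hact : ∀ k v, p (D.act k v) = D'.act (τ k) (p v))
    (hform : ∀ v w, D'.form (p v) (p w) = φ (D.form v w)) :
    CentralExtension D →* CentralExtension D' where
  toFun g := ⟨p g.vec, φ g.cen, τ g.deg⟩
  map_one' := by ext <;> simp
  map_mul' g h := by ext <;> simp [hact, ← hform]

lemma cen_sub_cen_of_mul_eq {x g₁ g₂ : CentralExtension D} {v : V} (hx : x * g₁ = g₂ * x)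
    (h₁ : g₁.vec = v) (h₂ : g₂.vec = v) (hv : D.act x.deg v = v)
    (hxvec : D.act g₂.deg x.vec = x.vec) :
    g₂.cen - g₁.cen = D.form x.vec v - D.form v x.vec := by
  have hcen := congrArg cen hx
  rw [cen_mul, cen_mul, h₁, h₂, hv, hxvec] at hcen
  rw [sub_eq_sub_iff_add_eq_add]
  refine add_left_cancel (a := x.cen) ?_
  calc x.cen + (g₂.cen + D.form v x.vec) = g₂.cen + x.cen + D.form v x.vec := by abel
    _ = x.cen + g₁.cen + D.form x.vec v := hcen.symm
    _ = x.cen + (D.form x.vec v + g₁.cen) := by abel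

end CentralExtension

namespace CentralExtension

variable {V A : Type*} [AddCommGroup V] [AddCommGroup A] {D : InvariantCocycle V A ℤ}

lemma commute_of_vec_mul_eq [IsAddTorsionFree A] {g h : CentralExtension D} (hdeg : g.deg ≠ 0)
    (hfix : ∀ v, D.act g.deg v = v → v = 0) (hvec : (h * g).vec = (g * h).vec) :
    Commute h g := by
  obtain ⟨z, hz⟩ := exists_mul_ofCen_eq hvec (add_comm h.deg g.deg)
  have hzpow := zpow_mul_eq_of_mul_eq (commute_ofCen z h).symm hz g.deg
  -- `h ^ g.deg` has the same degree as `g ^ h.deg`, and their quotient `y` is central.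
  obtain ⟨y, hy⟩ : ∃ y, h ^ g.deg = y * g ^ h.deg := ⟨_, (inv_mul_cancel_right _ _).symm⟩
  have hydeg : y.deg = 0 := by
    have := congrArg deg hy
    rw [deg_mul, deg_zpow, deg_zpow, smul_eq_mul, smul_eq_mul, mul_comm] at this
    exact right_eq_add.1 this
  have hyg : y * g = g * y * ofCen D z ^ g.deg := by
    rw [hy, mul_assoc, ← zpow_add_one, add_comm, zpow_one_add, ← mul_assoc, ← mul_assoc,
      mul_assoc _ _ (ofCen D z ^ _), ← ((commute_ofCen z _).zpow_left _).eq, ← mul_assoc] at hzpow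
    exact mul_right_cancel hzpow
  have hyvec : y.vec = 0 := by
    refine hfix _ ?_
    have := congrArg vec hyg
    rw [← map_zpow] at this
    simpa [-map_zpow, hydeg, D.act_zero, add_comm g.vec, eq_comm] using this
  have hzone : ofCen D z ^ g.deg = 1 := by
    rw [eq_ofCen hyvec hydeg, (commute_ofCen _ g).eq] at hyg
    exact left_eq_mul.1 hyg
  rw [← map_zpow, ← map_one (ofCen D), ofCen_injective.eq_iff,
    IsMulTorsionFree.zpow_eq_one_iff_left hdeg] at hzone
  rw [hzone, map_one, mul_one] at hz
  exact hz

end CentralExtension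

section Translation

variable {R T A : Type*} [CommRing R] [AddCommGroup T] [AddCommGroup A] [Module R A]

/-- Translation of finitely supported functions: `shiftBy R k v i = v (i - k)`. -/
noncomputable def shiftBy (R : Type*) {T : Type*} [CommRing R] [AddCommGroup T] (k : T) :
    (T →₀ R) →ₗ[R] (T →₀ R) :=
  (Finsupp.domLCongr (Equiv.addLeft k)).toLinearMap

@[simp] lemma shiftBy_apply (k : T) (v : T →₀ R) (i : T) : shiftBy R k v i = v (i - k) := by
  simp [shiftBy, Finsupp.equivMapDomain_apply, sub_eq_neg_add]

@[simp] lemma shiftBy_single (k i : T) (r : R) :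
    shiftBy R k (Finsupp.single i r) = Finsupp.single (k + i) r := by
  simp [shiftBy]

lemma shiftBy_zero (v : T →₀ R) : shiftBy R 0 v = v := by
  ext
  simp

/-- The translation-invariant bilinear form with kernel `κ`: `(v, w) ↦ ∑ v i * w j • κ (i - j)`. -/
noncomputable def convForm (R : Type*) {T A : Type*} [CommRing R] [AddCommGroup T]
    [AddCommGroup A] [Module R A] (κ : T → A) : (T →₀ R) →ₗ[R] (T →₀ R) →ₗ[R] A :=
  Finsupp.linearCombination R fun i => Finsupp.linearCombination R fun j => κ (i - j)

@[simp] lemma convForm_single_single (κ : T → A) (i j : T) (r s : R) :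
    convForm R κ (Finsupp.single i r) (Finsupp.single j s) = r • s • κ (i - j) := by
  simp [convForm]

lemma convForm_shiftBy (κ : T → A) (k : T) (v w : T →₀ R) :
    convForm R κ (shiftBy R k v) (shiftBy R k w) = convForm R κ v w := by
  have : (convForm R κ).compl₁₂ (shiftBy R k) (shiftBy R k) = convForm R κ := by
    ext i j
    simp
  exact LinearMap.congr_fun₂ this v w

/-- Twice the odd part of a kernel. The form with kernel `oddPart κ` is the commutator form of the
cocycle with kernel `κ`. -/
def oddPart {T A : Type*} [AddCommGroup T] [AddCommGroup A] (κ : T → A) (j : T) : A :=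
  κ j - κ (-j)

lemma convForm_sub_swap (κ : T → A) (v w : T →₀ R) :
    convForm R κ v w - convForm R κ w v = convForm R (oddPart κ) v w := by
  have : convForm R κ - (convForm R κ).flip = convForm R (oddPart κ) := by
    ext i j
    simp [oddPart]
  exact LinearMap.congr_fun₂ this v w

/-- The group `T` acting by translations on `T →₀ R`, with the form of kernel `κ`. -/
noncomputable def translationCocycle (R : Type*) {T A : Type*} [CommRing R] [AddCommGroup T]
    [AddCommGroup A] [Module R A] (κ : T → A) : InvariantCocycle (T →₀ R) A T where
  act k := (shiftBy R k).toAddMonoidHom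
  act_zero := shiftBy_zero
  act_add k l v := by ext; simp [sub_sub]
  form := LinearMap.toAddMonoidHom'.comp (convForm R κ).toAddMonoidHom
  form_act k v w := convForm_shiftBy κ k v w

@[simp] lemma translationCocycle_act (κ : T → A) (k : T) (v : T →₀ R) :
    (translationCocycle R κ).act k v = shiftBy R k v := rfl

@[simp] lemma translationCocycle_form (κ : T → A) (v w : T →₀ R) :
    (translationCocycle R κ).form v w = convForm R κ v w := rfl

/-- The central extension of the wreath product `R ≀ T` attached to the kernel `κ`. -/
abbrev WreathExtension (R : Type*) {T A : Type*} [CommRing R] [AddCommGroup T]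
    [AddCommGroup A] [Module R A] (κ : T → A) : Type _ :=
  CentralExtension (translationCocycle R κ)

end Translation

section Periodic

open Function

variable {R T A : Type*} [CommRing R] [AddCommGroup T] [AddCommGroup A]

lemma periodic_of_shiftBy_eq {k : T} {w : T →₀ R} (h : shiftBy R k w = w) : Periodic w k :=
  fun i => by simpa using (DFunLike.congr_fun h (i + k)).symm

lemma eq_zero_of_shiftBy_eq {k : ℤ} (hk : k ≠ 0) {w : ℤ →₀ R} (h : shiftBy R k w = w) :
    w = 0 := by
  ext i
  by_contra hi
  refine Set.infinite_of_injective_forall_mem (f := fun n : ℤ => i + n * k)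
    (fun m n hmn => ?_) (fun n => ?_) w.support.finite_toSet
  · exact mul_right_cancel₀ hk (add_left_cancel hmn)
  · rw [Finset.mem_coe, Finsupp.mem_support_iff]
    simpa using ((periodic_of_shiftBy_eq h).int_mul n i).symm ▸ hi

lemma oddPart_periodic {κ : T → A} {p : T} (hκ : Periodic κ p) : Periodic (oddPart κ) p :=
  fun x => by simp only [oddPart, hκ x, neg_add', hκ.sub_eq]

lemma sum_eq_zero_of_periodic [Fintype T] {F : T → A} {p : T} (hF : Periodic F p)
    (hp : ∀ a : A, addOrderOf p • a = 0) : ∑ x, F x = 0 := by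
  let e : T ≃ (T ⧸ AddSubgroup.zmultiples p) × AddSubgroup.zmultiples p :=
    AddSubgroup.addGroupEquivQuotientProdAddSubgroup
  have := Fintype.ofFinite (T ⧸ AddSubgroup.zmultiples p)
  have := Fintype.ofFinite (AddSubgroup.zmultiples p)
  calc ∑ x, F x = ∑ x, hF.lift (e x).1 := rfl
    _ = ∑ y : (T ⧸ AddSubgroup.zmultiples p) × AddSubgroup.zmultiples p, hF.lift y.1 :=
      e.sum_comp fun y => hF.lift y.1
    _ = ∑ q, addOrderOf p • hF.lift q := by
      simp [Fintype.sum_prod_type, ← Nat.card_eq_fintype_card, Nat.card_zmultiples]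
    _ = 0 := Finset.sum_eq_zero fun q _ => hp _

variable [Module R A]

lemma convForm_eq_zero_of_periodic [Finite T] {κ : T → A} {w : T →₀ R} {p : T}
    (hκ : Periodic κ p) (hw : Periodic w p) (hp : ∀ a : A, addOrderOf p • a = 0) (v : T →₀ R) :
    convForm R κ w v = 0 := by
  have := Fintype.ofFinite T
  induction v using Finsupp.induction_linear with
  | zero => exact map_zero _
  | add f g hf hg => rw [map_add, hf, hg, add_zero]
  | single j s =>
    have hsum : convForm R κ w (Finsupp.single j s) = ∑ i, w i • s • κ (i - j) := by
      rw [convForm, Finsupp.linearCombination_apply, Finsupp.sum_fintype _ _ (by simp)]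
      simp
    rw [hsum]
    refine sum_eq_zero_of_periodic (fun i => ?_) hp
    rw [hw, add_sub_right_comm, hκ]

end Periodic

section FiniteQuotients

open Filter

lemma exists_ne_nsmul {M : Type*} [AddCommGroup M] [Module.Finite ℤ M] {x : M} (hx : x ≠ 0) :
    ∃ q : ℕ, 0 < q ∧ ∀ y : M, x ≠ q • y := by
  obtain ⟨a, ha⟩ := IsPrincipalIdealRing.principal (LinearMap.toSpanSingleton ℤ M x).ker
  have hker (c : ℤ) : c • x = 0 ↔ a ∣ c := by
    rw [← Ideal.mem_span_singleton, Ideal.span, ← ha, LinearMap.mem_ker,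
      LinearMap.toSpanSingleton_apply]
  have hunit : a.natAbs ≠ 1 := fun h => hx (by
    rw [← one_smul ℤ x, hker]
    exact (Int.isUnit_iff_natAbs_eq.2 h).dvd)
  obtain ⟨p, hp, hpa⟩ := Nat.exists_prime_and_dvd hunit
  by_contra! hdiv
  have hmem : x ∈ (⨅ i : ℕ, Ideal.span {(p : ℤ)} ^ i • ⊤ : Submodule ℤ M) := by
    refine Submodule.mem_iInf _ |>.2 fun i => ?_
    obtain ⟨y, hy⟩ := hdiv (p ^ i) (pow_pos hp.pos i)
    rw [hy, Ideal.span_singleton_pow, ← natCast_zsmul, Nat.cast_pow]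
    exact Submodule.smul_mem_smul (Ideal.mem_span_singleton_self _) Submodule.mem_top
  -- Krull's intersection theorem: `x` is fixed by some `s` divisible by `p`.
  obtain ⟨⟨s, hs⟩, hsx⟩ := (Ideal.mem_iInf_smul_pow_eq_bot_iff _ x).1 hmem
  have hs' : a ∣ 1 - s := (hker _).1 (by rw [sub_smul, one_smul, sub_eq_zero]; exact hsx.symm)
  have hp1 : (p : ℤ) ∣ 1 :=
    (dvd_sub_left (Ideal.mem_span_singleton.1 hs)).1 ((Int.natCast_dvd.2 hpa).trans hs')
  exact hp.one_lt.ne' (Nat.dvd_one.1 (Int.natCast_dvd_natCast.1 (by exact_mod_cast hp1)))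

lemma eventually_intCast_eq_zero (a : ℤ) : ∀ᶠ Q : ℕ in atTop, (a : ZMod Q) = 0 → a = 0 := by
  filter_upwards [eventually_gt_atTop a.natAbs] with Q hQ ha
  rw [ZMod.intCast_zmod_eq_zero_iff_dvd] at ha
  exact Int.eq_zero_of_abs_lt_dvd ha (by rw [Int.abs_eq_natAbs]; exact_mod_cast hQ)

section Coefficients

variable {ι : Type*}

/-- Restriction of a finitely supported function to a finite set of coordinates. -/
noncomputable def truncate (s : Finset ι) : (ι →₀ ℤ) →ₗ[ℤ] (s → ℤ) :=
  LinearMap.funLeft ℤ ℤ Subtype.val ∘ₗ Finsupp.lcoeFun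

/-- Restriction to finitely many coordinates, followed by reduction modulo `Q`. -/
noncomputable def cenReduce (s : Finset ι) (Q : ℕ) : (ι →₀ ℤ) →+ (s → ZMod Q) :=
  ((Int.castAddHom (ZMod Q)).compLeft s).comp (truncate s).toAddMonoidHom

@[simp] lemma cenReduce_apply (s : Finset ι) (Q : ℕ) (z : ι →₀ ℤ) (u : s) :
    cenReduce s Q z u = (z u : ZMod Q) := rfl

/-- A subgroup of `ι →₀ ℤ` that is coordinatewise an ideal `I` outside a finite set is closed in
the topology defined by the maps `cenReduce`. -/
lemma exists_cenReduce_ne {B : Submodule ℤ (ι →₀ ℤ)} {I : Ideal ℤ}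
    (hBI : ∀ b ∈ B, ∀ u, b u ∈ I) (hIB : ∀ᶠ u in cofinite, ∀ a ∈ I, Finsupp.single u a ∈ B)
    {z : ι →₀ ℤ} (hz : z ∉ B) :
    ∃ (s : Finset ι) (q : ℕ), 0 < q ∧ ∀ b ∈ B, cenReduce s q b ≠ cenReduce s q z := by
  classical
  set s := (eventually_cofinite.1 hIB).toFinset ∪ z.support with hs
  have hzs : truncate s z ∉ B.map (truncate s) := by
    rintro ⟨b, hb, hbz⟩
    have hsub : b - z ∈ B := by
      rw [← Finsupp.sum_single (b - z)]
      refine sum_mem fun u hu => ?_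
      have hus : u ∉ s := fun hus => Finsupp.mem_support_iff.1 hu
        (sub_eq_zero.2 (congrFun hbz ⟨u, hus⟩))
      simp only [hs, Finset.mem_union, Set.Finite.mem_toFinset, Set.mem_ofPred_eq, not_or, not_not,
        Finsupp.mem_support_iff] at hus
      rw [Finsupp.sub_apply, hus.2, sub_zero]
      exact hus.1 _ (hBI b hb u)
    exact hz (sub_sub_cancel b z ▸ sub_mem hb hsub)
  obtain ⟨q, hq, hqy⟩ := exists_ne_nsmul (x := (B.map (truncate s)).mkQ (truncate s z))
    (by simpa using hzs)
  refine ⟨s, q, hq, fun b hb hbz => ?_⟩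
  have hdvd (u : s) : (q : ℤ) ∣ z u - b u :=
    (ZMod.intCast_eq_intCast_iff_dvd_sub _ _ _).1 (congrFun hbz u)
  choose y hy using hdvd
  have hzb : truncate s z = q • y + truncate s b := by
    ext u
    rw [Pi.add_apply, Pi.smul_apply, nsmul_eq_mul]
    exact sub_eq_iff_eq_add.1 (hy u)
  have hb0 : (B.map (truncate s)).mkQ (truncate s b) = 0 :=
    (Submodule.Quotient.mk_eq_zero _).2 (Submodule.mem_map_of_mem hb)
  exact hqy ((B.map (truncate s)).mkQ y) (by rw [hzb, map_add, hb0, add_zero, map_nsmul])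

end Coefficients

section Reduction

/-- Reduction of positions modulo `m`. -/
noncomputable def fold (m : ℕ) : (ℤ →₀ ℤ) →+ (ZMod m →₀ ℤ) :=
  Finsupp.mapDomain.addMonoidHom (Int.cast : ℤ → ZMod m)

/-- Reduction of coefficients modulo `Q`. -/
noncomputable def modCoeff (Q : ℕ) (T : Type*) : (T →₀ ℤ) →+ (T →₀ ZMod Q) :=
  Finsupp.mapRange.addMonoidHom (Int.castAddHom (ZMod Q))

/-- Reduction of positions modulo `m` and of coefficients modulo `Q`. -/
noncomputable def reduce (m Q : ℕ) : (ℤ →₀ ℤ) →+ (ZMod m →₀ ZMod Q) :=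
  (modCoeff Q (ZMod m)).comp (fold m)

variable {T : Type*} {m Q : ℕ}

@[simp] lemma fold_single (m : ℕ) (i s : ℤ) :
    fold m (Finsupp.single i s) = Finsupp.single (i : ZMod m) s := by
  simp [fold]

@[simp] lemma modCoeff_apply (v : T →₀ ℤ) (i : T) : modCoeff Q T v i = (v i : ZMod Q) := by
  simp [modCoeff]

@[simp] lemma reduce_single (m Q : ℕ) (i s : ℤ) :
    reduce m Q (Finsupp.single i s) = Finsupp.single (i : ZMod m) (s : ZMod Q) := by
  simp [reduce, modCoeff]

lemma fold_shiftBy (m : ℕ) (k : ℤ) (v : ℤ →₀ ℤ) :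
    fold m (shiftBy ℤ k v) = shiftBy ℤ (k : ZMod m) (fold m v) := by
  induction v using Finsupp.induction_linear with
  | zero => simp
  | add f g hf hg => simp only [map_add, hf, hg]
  | single i s => simp

lemma reduce_shiftBy (m Q : ℕ) (k : ℤ) (v : ℤ →₀ ℤ) :
    reduce m Q (shiftBy ℤ k v) = shiftBy (ZMod Q) (k : ZMod m) (reduce m Q v) := by
  ext i
  simp [reduce, fold_shiftBy]

lemma reduce_surjective (m Q : ℕ) : Function.Surjective (reduce m Q) := fun w => by
  induction w using Finsupp.induction_linear with
  | zero => exact ⟨0, map_zero _⟩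
  | add f g hf hg =>
    obtain ⟨v, rfl⟩ := hf
    obtain ⟨w, rfl⟩ := hg
    exact ⟨v + w, map_add _ v w⟩
  | single i s =>
    obtain ⟨i, rfl⟩ := ZMod.intCast_surjective i
    obtain ⟨s, rfl⟩ := ZMod.intCast_surjective s
    exact ⟨Finsupp.single i s, reduce_single m Q i s⟩

lemma reduce_eq_zero_of_dvd {m' : ℕ} (h : m' ∣ m) {v : ℤ →₀ ℤ} (hv : reduce m Q v = 0) :
    reduce m' Q v = 0 := by
  have key (v : ℤ →₀ ℤ) : reduce m' Q v =
      Finsupp.mapDomain.addMonoidHom (ZMod.castHom h (ZMod m')) (reduce m Q v) := by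
    induction v using Finsupp.induction_linear with
    | zero => simp
    | add f g hf hg => simp only [map_add, hf, hg]
    | single i s => simp
  rw [key, hv, map_zero]

lemma exists_of_reduce_apply_ne_zero {v : ℤ →₀ ℤ} {x : ZMod m} (h : reduce m Q v x ≠ 0) :
    ∃ j ∈ v.support, (j : ZMod m) = x := by
  classical
  have hx : x ∈ (fold m v).support := Finsupp.mem_support_iff.2 fun h0 =>
    h (by simp [reduce, h0])
  simpa using Finsupp.mapDomain_support hx

lemma eventually_modCoeff_eq_zero (v : T →₀ ℤ) :
    ∀ᶠ Q : ℕ in atTop, modCoeff Q T v = 0 → v = 0 := by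
  filter_upwards [(eventually_all_finset v.support).2 fun i _ =>
    eventually_intCast_eq_zero (v i)] with Q hQ hv
  ext i
  by_contra hi
  exact hi (hQ i (Finsupp.mem_support_iff.2 hi) (by rw [← modCoeff_apply, hv]; rfl))

lemma eventually_fold_eq_zero (v : ℤ →₀ ℤ) : ∀ᶠ m : ℕ in atTop, fold m v = 0 → v = 0 := by
  filter_upwards [(eventually_all_finset v.support).2 fun i _ =>
    (eventually_all_finset v.support).2 fun j _ => eventually_intCast_eq_zero (i - j)] with m hm hv
  have hinj : Set.InjOn (Int.cast : ℤ → ZMod m) v.support := fun i hi j hj hij =>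
    sub_eq_zero.1 (hm i hi j hj (by rw [Int.cast_sub, hij, sub_self]))
  exact Finsupp.mapDomain_injOn _ hinj (by simp) (by simp) (hv.trans (map_zero (fold m)).symm)

lemma exists_reduce_eq_zero (F : Finset (ℤ →₀ ℤ)) :
    ∃ m Q : ℕ, 0 < m ∧ 0 < Q ∧ ∀ v ∈ F, reduce m Q v = 0 → v = 0 := by
  obtain ⟨m, hm0, hm⟩ := ((eventually_gt_atTop 0).and
    ((eventually_all_finset F).2 fun v _ => eventually_fold_eq_zero v)).exists
  obtain ⟨Q, hQ0, hQ⟩ := ((eventually_gt_atTop 0).and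
    ((eventually_all_finset F).2 fun v _ => eventually_modCoeff_eq_zero (fold m v))).exists
  exact ⟨m, Q, hm0, hQ0, fun v hv h => hm v hv (hQ v hv h)⟩

/-- The kernel of reduction modulo `k` consists of the coboundaries of translation by `k`. -/
lemma exists_of_fold_eq_zero {k : ℤ} {v : ℤ →₀ ℤ} (hv : fold k.natAbs v = 0) :
    ∃ w, v = w - shiftBy ℤ k w := by
  set N := LinearMap.range (LinearMap.id - shiftBy ℤ k)
  have hper : Function.Periodic (fun i => N.mkQ (Finsupp.single i 1)) k := fun i => by
    refine ((Submodule.Quotient.eq N).2 ⟨Finsupp.single i 1, ?_⟩).symm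
    simp [add_comm]
  have hcast (i : ℤ) : N.mkQ (Finsupp.single ((i : ZMod k.natAbs).cast) 1) =
      N.mkQ (Finsupp.single i 1) := by
    obtain ⟨n, hn⟩ : k ∣ (i : ZMod k.natAbs).cast - i := by
      rw [← Int.natAbs_dvd, ← ZMod.intCast_eq_intCast_iff_dvd_sub]
      simp
    simpa only [Int.cast_id, mul_comm n, ← hn, add_sub_cancel] using hper.int_mul n i
  have hfactor : (Finsupp.linearCombination ℤ fun x : ZMod k.natAbs =>
      N.mkQ (Finsupp.single x.cast 1)).toAddMonoidHom.comp (fold k.natAbs) =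
      N.mkQ.toAddMonoidHom := by
    ext i
    simpa using hcast i
  have hvN : N.mkQ v = 0 := by
    rw [← LinearMap.toAddMonoidHom_coe, ← hfactor, AddMonoidHom.comp_apply, hv, map_zero]
  obtain ⟨w, hw⟩ := (Submodule.Quotient.mk_eq_zero N).1 hvN
  exact ⟨w, hw.symm⟩

lemma exists_shiftBy_reduce_ne {v₁ v₂ : ℤ →₀ ℤ} (h : ∀ l : ℤ, shiftBy ℤ l v₁ ≠ v₂) :
    ∃ m Q : ℕ, 0 < m ∧ 0 < Q ∧
      ∀ l : ZMod m, shiftBy (ZMod Q) l (reduce m Q v₁) ≠ reduce m Q v₂ := by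
  classical
  obtain ⟨m, Q, hm, hQ, hzero⟩ := exists_reduce_eq_zero ({v₁, v₂} ∪
    (v₁.support ×ˢ v₂.support).image fun p => shiftBy ℤ (p.2 - p.1) v₁ - v₂)
  refine ⟨m, Q, hm, hQ, fun l hl => ?_⟩
  rcases eq_or_ne v₁ 0 with rfl | hv
  · rw [map_zero, map_zero] at hl
    exact h 0 (by rw [map_zero, hzero v₂ (by simp) hl.symm])
  obtain ⟨x, hx⟩ := Finsupp.ne_iff.1 fun h₁ => hv (hzero v₁ (by simp) h₁)
  have hxl : reduce m Q v₂ (x + l) ≠ 0 := by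
    rwa [← hl, shiftBy_apply, add_sub_cancel_right]
  obtain ⟨i, hi, rfl⟩ := exists_of_reduce_apply_ne_zero hx
  obtain ⟨j, hj, hjl⟩ := exists_of_reduce_apply_ne_zero hxl
  refine h (j - i) (sub_eq_zero.1 (hzero _ ?_ ?_))
  · exact Finset.mem_union_right _ (Finset.mem_image.2 ⟨(i, j), Finset.mk_mem_product hi hj, rfl⟩)
  · rw [map_sub, reduce_shiftBy, sub_eq_zero, ← hl, Int.cast_sub, hjl, add_sub_cancel_left]

lemma eventually_exists_twisted_conj {k : ℤ} (hk : k ≠ 0) (v₁ v₂ : ℤ →₀ ℤ) :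
    ∀ᶠ Q : ℕ in atTop, ∀ m : ℕ, k.natAbs ∣ m → ∀ (w : ZMod m →₀ ZMod Q) (l : ZMod m),
      w + shiftBy (ZMod Q) l (reduce m Q v₁) =
        reduce m Q v₂ + shiftBy (ZMod Q) (k : ZMod m) w →
      ∃ (w₀ : ℤ →₀ ℤ) (l₀ : ℤ), (l₀ : ZMod m) = l ∧
        w₀ + shiftBy ℤ l₀ v₁ = v₂ + shiftBy ℤ k w₀ := by
  have : NeZero k.natAbs := ⟨Int.natAbs_ne_zero.2 hk⟩
  filter_upwards [eventually_all.2 fun x : ZMod k.natAbs => eventually_modCoeff_eq_zero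
    (fold k.natAbs v₂ - shiftBy ℤ x (fold k.natAbs v₁))] with Q hQ m hm w l hwl
  obtain ⟨l, rfl⟩ := ZMod.intCast_surjective l
  obtain ⟨w, rfl⟩ := reduce_surjective m Q w
  have hm0 : reduce m Q (v₂ - shiftBy ℤ l v₁ - (w - shiftBy ℤ k w)) = 0 := by
    rw [map_sub, map_sub, map_sub, reduce_shiftBy, reduce_shiftBy, sub_sub_sub_comm,
      sub_eq_zero, sub_eq_sub_iff_add_eq_add, ← hwl, add_comm]
  have hkk : (k : ZMod k.natAbs) = 0 :=
    (ZMod.intCast_zmod_eq_zero_iff_dvd _ _).2 (Int.natAbs_dvd.2 dvd_rfl)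
  have hk0 := reduce_eq_zero_of_dvd hm hm0
  rw [map_sub, map_sub _ w, reduce_shiftBy, hkk, shiftBy_zero, sub_self, sub_zero] at hk0
  have hfold : fold k.natAbs (v₂ - shiftBy ℤ l v₁) = 0 := by
    rw [map_sub, fold_shiftBy]
    exact hQ _ (by rwa [← fold_shiftBy, ← map_sub])
  obtain ⟨w₀, hw₀⟩ := exists_of_fold_eq_zero hfold
  exact ⟨w₀, l, rfl, (sub_eq_sub_iff_add_eq_add.1 hw₀).symm⟩

end Reduction

end FiniteQuotients

section ConjugacySeparability

open Filter Function CentralExtension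

variable {ι : Type*} {κ : ℤ → ι →₀ ℤ}

/-- The quotient of Hall's group in which the commutators of the translates of the generator `a`
are given by `oddPart κ`. -/
abbrev HallExtension (κ : ℤ → ι →₀ ℤ) : Type _ := WreathExtension ℤ κ

/-- The central values of the commutators with an element whose component in `ℤ →₀ ℤ` is `v`. -/
noncomputable def commImage (κ : ℤ → ι →₀ ℤ) (v : ℤ →₀ ℤ) : Submodule ℤ (ι →₀ ℤ) :=
  LinearMap.range ((convForm ℤ (oddPart κ)).flip v)

lemma exists_mem_of_mem_commImage (κ : ℤ → ι →₀ ℤ) (v : ℤ →₀ ℤ) :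
    ∀ b ∈ commImage κ v, ∀ u, b u ∈ Ideal.span (Set.range v) := by
  rintro _ ⟨w, rfl⟩ u
  rw [LinearMap.flip_apply, convForm, Finsupp.linearCombination_apply, Finsupp.sum,
    LinearMap.sum_apply, Finsupp.finsetSum_apply]
  refine sum_mem fun i _ => ?_
  rw [LinearMap.smul_apply, Finsupp.smul_apply, Finsupp.linearCombination_apply, Finsupp.sum,
    Finsupp.finsetSum_apply]
  refine Ideal.mul_mem_left _ _ (sum_mem fun j _ => ?_)
  exact Ideal.mul_mem_right _ _ (Ideal.subset_span ⟨j, rfl⟩)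

lemma eventually_single_mem_commImage {v : ℤ →₀ ℤ}
    (h : ∀ᶠ u in cofinite, ∀ j, Finsupp.single u (v j) ∈ commImage κ v) :
    ∀ᶠ u in cofinite, ∀ a ∈ Ideal.span (Set.range v), Finsupp.single u a ∈ commImage κ v := by
  filter_upwards [h] with u hu
  refine Submodule.span_le (p := (commImage κ v).comap (Finsupp.lsingle u)).2 ?_
  rintro _ ⟨j, rfl⟩
  exact hu j

lemma exists_common_period (hper : ∀ u, ∃ P : ℕ, 0 < P ∧ Periodic (κ · u) P) (s : Finset ι) :
    ∃ P : ℕ, 0 < P ∧ ∀ u ∈ s, Periodic (κ · u) P := by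
  choose P hP0 hP using hper
  refine ⟨∏ u ∈ s, P u, Finset.prod_pos fun u _ => hP0 u, fun u hu => ?_⟩
  obtain ⟨n, hn⟩ := Finset.dvd_prod_of_mem P hu
  simpa only [hn, Nat.cast_mul, Int.cast_id, mul_comm] using (hP u).int_mul n

/-- The reduction of the kernel `κ`, meaningful when `m` is a period of its coordinates in `s`. -/
noncomputable def reduceKernel (κ : ℤ → ι →₀ ℤ) (s : Finset ι) (m Q : ℕ) (x : ZMod m) :
    s → ZMod Q :=
  cenReduce s Q (κ x.cast)

variable {s : Finset ι} {m Q : ℕ}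

lemma reduceKernel_intCast (hm : ∀ u ∈ s, Periodic (κ · u) m) (j : ℤ) :
    reduceKernel κ s m Q j = cenReduce s Q (κ j) := by
  obtain ⟨n, hn⟩ : (m : ℤ) ∣ (j : ZMod m).cast - j := by
    rw [← ZMod.intCast_eq_intCast_iff_dvd_sub]
    simp
  ext u
  have hu : κ (j + n * m) u = κ j u := (hm u u.2).int_mul n j
  rw [reduceKernel, cenReduce_apply, cenReduce_apply, ← hu, mul_comm, ← hn, add_sub_cancel]

lemma reduceKernel_periodic {p : ℤ} (hm : ∀ u ∈ s, Periodic (κ · u) m)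
    (hp : ∀ u ∈ s, Periodic (κ · u) p) : Periodic (reduceKernel κ s m Q) (p : ZMod m) := by
  intro x
  obtain ⟨j, rfl⟩ := ZMod.intCast_surjective x
  rw [← Int.cast_add, reduceKernel_intCast hm, reduceKernel_intCast hm]
  ext u
  exact congrArg Int.cast (hp u u.2 j)

lemma convForm_reduce (hm : ∀ u ∈ s, Periodic (κ · u) m) (v w : ℤ →₀ ℤ) :
    convForm (ZMod Q) (reduceKernel κ s m Q) (reduce m Q v) (reduce m Q w) =
      cenReduce s Q (convForm ℤ κ v w) := by
  induction v using Finsupp.induction_linear with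
  | zero => simp
  | add f g hf hg => simp only [map_add, LinearMap.add_apply, hf, hg]
  | single i a =>
    induction w using Finsupp.induction_linear with
    | zero => simp
    | add f g hf hg => simp only [map_add, hf, hg]
    | single j b =>
      rw [reduce_single, reduce_single, convForm_single_single, convForm_single_single,
        ← Int.cast_sub, reduceKernel_intCast hm]
      ext u
      simp

/-- The finite quotient of `HallExtension κ` obtained by reducing positions modulo `m` and
coefficients modulo `Q`, and keeping the central coordinates in `s`. -/
noncomputable def finHom (Q : ℕ) (hm : ∀ u ∈ s, Periodic (κ · u) m) :
    HallExtension κ →* WreathExtension (ZMod Q) (reduceKernel κ s m Q) :=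
  CentralExtension.map (reduce m Q) (cenReduce s Q) (Int.castAddHom (ZMod m))
    (reduce_shiftBy m Q) (convForm_reduce hm)

@[simp] lemma vec_finHom (hm : ∀ u ∈ s, Periodic (κ · u) m) (g : HallExtension κ) :
    (finHom Q hm g).vec = reduce m Q g.vec := rfl

@[simp] lemma cen_finHom (hm : ∀ u ∈ s, Periodic (κ · u) m) (g : HallExtension κ) :
    (finHom Q hm g).cen = cenReduce s Q g.cen := rfl

@[simp] lemma deg_finHom (hm : ∀ u ∈ s, Periodic (κ · u) m) (g : HallExtension κ) :
    (finHom Q hm g).deg = (g.deg : ZMod m) := rfl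

variable {g₁ g₂ : HallExtension κ}

lemma conjSeparated_of_deg_ne (h : g₁.deg ≠ g₂.deg) : ConjSeparated g₁ g₂ := by
  obtain ⟨m, hm0, hm⟩ := ((eventually_gt_atTop 0).and
    (eventually_intCast_eq_zero (g₁.deg - g₂.deg))).exists
  have : NeZero m := ⟨hm0.ne'⟩
  refine conjSeparated_of_hom ((AddMonoidHom.toMultiplicative (Int.castAddHom (ZMod m))).comp
    (degHom _)) fun x hx => h (sub_eq_zero.1 (hm ?_))
  rw [mul_comm, mul_right_cancel_iff] at hx
  rw [Int.cast_sub, sub_eq_zero]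
  exact congrArg Multiplicative.toAdd hx

/-- The excluded equation says that an element with components `w` and `l` conjugates `g₁` to `g₂`
modulo the center. -/
lemma conjSeparated_of_forall_vec_ne
    (h : ∀ (w : ℤ →₀ ℤ) (l : ℤ), w + shiftBy ℤ l g₁.vec ≠ g₂.vec + shiftBy ℤ g₂.deg w) :
    ConjSeparated g₁ g₂ := by
  have hm (m : ℕ) : ∀ u ∈ (∅ : Finset ι), Periodic (κ · u) m := by simp
  rcases eq_or_ne g₂.deg 0 with hk | hk
  · obtain ⟨m, Q, hm0, hQ0, hsep⟩ := exists_shiftBy_reduce_ne (v₁ := g₁.vec) (v₂ := g₂.vec)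
      fun l hl => h 0 l (by rw [hl, map_zero, zero_add, add_zero])
    have : NeZero m := ⟨hm0.ne'⟩
    have : NeZero Q := ⟨hQ0.ne'⟩
    refine conjSeparated_of_hom (finHom Q (hm m)) fun x hx => hsep x.deg ?_
    have hvec := congrArg CentralExtension.vec hx
    rw [vec_mul, vec_mul, deg_finHom, hk, Int.cast_zero, (translationCocycle _ _).act_zero,
      add_comm] at hvec
    exact add_right_cancel hvec
  · obtain ⟨Q, hQ0, hQ⟩ := ((eventually_gt_atTop 0).and
      (eventually_exists_twisted_conj hk g₁.vec g₂.vec)).exists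
    have : NeZero g₂.deg.natAbs := ⟨Int.natAbs_ne_zero.2 hk⟩
    have : NeZero Q := ⟨hQ0.ne'⟩
    refine conjSeparated_of_hom (finHom Q (hm g₂.deg.natAbs)) fun x hx => ?_
    obtain ⟨w, l, -, hw⟩ := hQ _ dvd_rfl x.vec x.deg (congrArg CentralExtension.vec hx)
    exact h w l hw

lemma cen_sub_cen_notMem_commImage (hg : ¬ IsConj g₁ g₂) (hdeg : g₁.deg = g₂.deg)
    (hvec : g₁.vec = g₂.vec) (hk : g₂.deg = 0) : g₂.cen - g₁.cen ∉ commImage κ g₂.vec := by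
  rintro ⟨w, hw⟩
  rw [LinearMap.flip_apply, ← convForm_sub_swap, sub_eq_sub_iff_add_eq_add] at hw
  refine hg (isConj_iff.2 ⟨ofVec _ w, mul_inv_eq_iff_eq_mul.2 (CentralExtension.ext ?_ ?_ ?_)⟩)
  · simp [hk, hvec, shiftBy_zero, add_comm]
  · simp [hk, hvec, shiftBy_zero, hw, add_comm g₁.cen]
  · simp [hdeg]

lemma conjSeparated_of_deg_eq_zero (hper : ∀ u, ∃ P : ℕ, 0 < P ∧ Periodic (κ · u) P)
    (hloc : ∀ᶠ u in cofinite, ∀ j, Finsupp.single u (g₂.vec j) ∈ commImage κ g₂.vec)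
    (hg : ¬ IsConj g₁ g₂) (hdeg : g₁.deg = g₂.deg) (hvec : g₁.vec = g₂.vec)
    (hk : g₂.deg = 0) : ConjSeparated g₁ g₂ := by
  obtain ⟨s, Q, hQ0, hsep⟩ := exists_cenReduce_ne (exists_mem_of_mem_commImage κ g₂.vec)
    (eventually_single_mem_commImage hloc) (cen_sub_cen_notMem_commImage hg hdeg hvec hk)
  obtain ⟨m, hm0, hm⟩ := exists_common_period hper s
  have : NeZero m := ⟨hm0.ne'⟩
  have : NeZero Q := ⟨hQ0.ne'⟩
  refine conjSeparated_of_hom (finHom Q hm) fun x hx => ?_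
  obtain ⟨w, hw⟩ := reduce_surjective m Q x.vec
  have hact (v) : (translationCocycle (ZMod Q) (reduceKernel κ s m Q)).act (finHom Q hm g₂).deg v =
      v := by
    rw [deg_finHom, hk, Int.cast_zero, InvariantCocycle.act_zero]
  have hfix := congrArg CentralExtension.vec hx
  rw [vec_mul, vec_mul, hact, vec_finHom, vec_finHom, hvec, add_comm, add_left_inj] at hfix
  refine hsep (convForm ℤ (oddPart κ) w g₂.vec) ⟨w, rfl⟩ ?_
  calc cenReduce s Q (convForm ℤ (oddPart κ) w g₂.vec)
      = cenReduce s Q (convForm ℤ κ w g₂.vec) - cenReduce s Q (convForm ℤ κ g₂.vec w) := by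
        rw [← map_sub, convForm_sub_swap]
    _ = (finHom Q hm g₂).cen - (finHom Q hm g₁).cen := by
        rw [cen_sub_cen_of_mul_eq hx (congrArg (reduce m Q) hvec) rfl hfix (hact _), ← hw,
          translationCocycle_form, translationCocycle_form, convForm_reduce hm,
          convForm_reduce hm]
    _ = cenReduce s Q (g₂.cen - g₁.cen) := (map_sub _ _ _).symm

lemma cen_eq_of_mul_eq {p : ℕ} (hm : ∀ u ∈ s, Periodic (κ · u) m)
    (hp : ∀ u ∈ s, Periodic (κ · u) p) (hkp : g₂.deg ∣ p) [NeZero m]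
    (horder : addOrderOf (p : ZMod m) = Q)
    (hvec : g₁.vec = g₂.vec) {x : WreathExtension (ZMod Q) (reduceKernel κ s m Q)}
    (hx : x * finHom Q hm g₁ = finHom Q hm g₂ * x) (hdeg : x.deg = 0) :
    cenReduce s Q (g₂.cen - g₁.cen) = 0 := by
  have hact (v) : (translationCocycle (ZMod Q) (reduceKernel κ s m Q)).act x.deg v = v := by
    rw [hdeg, InvariantCocycle.act_zero]
  have hfix := congrArg CentralExtension.vec hx
  rw [vec_mul, vec_mul, hact, vec_finHom, vec_finHom, hvec, add_comm, add_right_inj] at hfix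
  have hxper : Periodic x.vec (p : ZMod m) := by
    obtain ⟨n, hn⟩ := hkp
    have := (periodic_of_shiftBy_eq hfix.symm).int_mul n
    rwa [deg_finHom, ← Int.cast_mul, mul_comm, ← hn, Int.cast_natCast] at this
  have hker : Periodic (reduceKernel κ s m Q) (p : ZMod m) := by
    exact_mod_cast reduceKernel_periodic (p := p) hm hp
  rw [map_sub, ← cen_finHom hm, ← cen_finHom hm,
    cen_sub_cen_of_mul_eq hx (congrArg (reduce m Q) hvec) rfl (hact _) hfix.symm,
    translationCocycle_form, translationCocycle_form, convForm_sub_swap]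
  refine convForm_eq_zero_of_periodic (oddPart_periodic hker) hxper (fun a => ?_) _
  ext u
  simp [horder]

lemma mul_inv_mul_eq_of_commute {G : Type*} [Group G] {x y a b : G} (hy : Commute y a)
    (hx : x * a = b * x) : x * y⁻¹ * a = b * (x * y⁻¹) := by
  rw [mul_assoc, hy.inv_left.eq, ← mul_assoc, hx, mul_assoc]

lemma conjSeparated_of_deg_ne_zero (hper : ∀ u, ∃ P : ℕ, 0 < P ∧ Periodic (κ · u) P)
    (hg : ¬ IsConj g₁ g₂) (hdeg : g₁.deg = g₂.deg) (hvec : g₁.vec = g₂.vec)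
    (hk : g₂.deg ≠ 0) : ConjSeparated g₁ g₂ := by
  have hcen : g₂.cen - g₁.cen ≠ 0 := fun h =>
    hg (CentralExtension.ext hvec (sub_eq_zero.1 h).symm hdeg ▸ IsConj.refl g₁)
  obtain ⟨u, hu⟩ := Finsupp.ne_iff.1 hcen
  obtain ⟨Q, hQ0, hQu, hQ⟩ := ((eventually_gt_atTop 0).and ((eventually_intCast_eq_zero
    ((g₂.cen - g₁.cen) u)).and (eventually_exists_twisted_conj hk g₁.vec g₂.vec))).exists
  obtain ⟨P, hP0, hP⟩ := hper u
  set p := g₂.deg.natAbs * P with hp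
  have hp0 : 0 < p := Nat.mul_pos (Int.natAbs_pos.2 hk) hP0
  have hmul (n : ℕ) : ∀ u' ∈ ({u} : Finset ι), Periodic (κ · u') (n * P : ℕ) := fun u' hu' => by
    rw [Finset.mem_singleton.1 hu', Nat.cast_mul]
    exact hP.nat_mul n
  have hm : ∀ u' ∈ ({u} : Finset ι), Periodic (κ · u') (p * Q : ℕ) := by
    rw [hp, mul_right_comm]
    exact hmul _
  have : NeZero Q := ⟨hQ0.ne'⟩
  have : NeZero (p * Q) := ⟨(Nat.mul_pos hp0 hQ0).ne'⟩
  have horder : addOrderOf (p : ZMod (p * Q)) = Q := by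
    rw [ZMod.addOrderOf_coe _ (NeZero.ne _), Nat.gcd_mul_right_left, Nat.mul_div_cancel_left _ hp0]
  refine conjSeparated_of_hom (finHom Q hm) fun x hx => hu (hQu ?_)
  -- Lift the components of `x` to an element `y` commuting with `g₁`; dividing `x` by the image
  -- of `y` makes its degree trivial.
  obtain ⟨w, l, hl, hw⟩ := hQ (p * Q) ((dvd_mul_right _ _).mul_right _) x.vec x.deg
    (congrArg CentralExtension.vec hx)
  set y : HallExtension κ := ⟨w, 0, l⟩ with hy
  have hyg : Commute y g₁ := by
    refine commute_of_vec_mul_eq (hdeg ▸ hk) (fun v => eq_zero_of_shiftBy_eq (hdeg ▸ hk)) ?_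
    rw [vec_mul, vec_mul, hdeg, translationCocycle_act, translationCocycle_act, hw, ← hvec]
  have hxy := mul_inv_mul_eq_of_commute (hyg.map (finHom Q hm)) hx
  have hzero := cen_eq_of_mul_eq hm (hmul _) ((Int.dvd_natAbs.2 dvd_rfl).trans
    (Int.natCast_dvd_natCast.2 (dvd_mul_right _ P))) horder hvec hxy (by simp [hy, hl])
  exact congrFun hzero ⟨u, Finset.mem_singleton_self u⟩

lemma hallExtension_conjSep (hper : ∀ u, ∃ P : ℕ, 0 < P ∧ Periodic (κ · u) P)
    (hloc : ∀ v, ∀ᶠ u in cofinite, ∀ j, Finsupp.single u (v j) ∈ commImage κ v) :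
    ConjSep (HallExtension κ) := by
  intro g₁ g₂ hg
  change ConjSeparated g₁ g₂
  by_cases hdeg : g₁.deg = g₂.deg
  swap
  · exact conjSeparated_of_deg_ne hdeg
  by_cases! hv : ∀ (w : ℤ →₀ ℤ) (l : ℤ), w + shiftBy ℤ l g₁.vec ≠ g₂.vec + shiftBy ℤ g₂.deg w
  · exact conjSeparated_of_forall_vec_ne hv
  obtain ⟨w, l, hwl⟩ := hv
  set x : HallExtension κ := ⟨w, 0, l⟩
  have hdeg' : (x * g₁ * x⁻¹).deg = g₂.deg := by simp [hdeg]
  have hvec' : (x * g₁ * x⁻¹).vec = g₂.vec := by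
    have hx := congrArg CentralExtension.vec (inv_mul_cancel_right (x * g₁) x)
    rw [vec_mul, hdeg'] at hx
    exact add_right_cancel (hx.trans hwl)
  have hg' : ¬ IsConj (x * g₁ * x⁻¹) g₂ := fun h => hg ((isConj_iff.2 ⟨x, rfl⟩).trans h)
  refine ConjSeparated.of_conj (x := x) ?_
  rcases eq_or_ne g₂.deg 0 with hk | hk
  · exact conjSeparated_of_deg_eq_zero hper (hloc _) hg' hdeg' hvec' hk
  · exact conjSeparated_of_deg_ne_zero hper hg' hdeg' hvec' hk

end ConjugacySeparability

lemma closure_range_single {ι : Type*} :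
    AddSubgroup.closure (Set.range fun i : ι => Finsupp.single i (1 : ℤ)) = ⊤ := by
  rw [← Submodule.span_int_eq_addSubgroupClosure, ← Finsupp.coe_basisSingleOne,
    Module.Basis.span_eq, Submodule.top_toAddSubgroup]

namespace HallExtension

open CentralExtension

variable {ι : Type*} (κ : ℤ → ι →₀ ℤ)

/-- The image of Hall's generator `t`. -/
noncomputable def t : HallExtension κ := ofDeg _ (.ofAdd 1)

/-- The image of Hall's generator `a i`. -/
noncomputable def a (i : ℤ) : HallExtension κ := ofVec _ (Finsupp.single i 1)

/-- The image of Hall's generator `c i`. -/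
noncomputable def c (i : ℤ) : HallExtension κ := ofCen _ (.ofAdd (oddPart κ i))

lemma t_zpow (k : ℤ) : t κ ^ k = ofDeg _ (.ofAdd k) := by
  rw [t, ← map_zpow, ← ofAdd_zsmul, smul_eq_mul, mul_one]

lemma t_zpow_conj_a (k i : ℤ) : t κ ^ k * a κ i * (t κ ^ k)⁻¹ = a κ (k + i) := by
  rw [t_zpow, a, ofDeg_conj_ofVec, translationCocycle_act, shiftBy_single, a]

lemma pcomm_a (i j : ℤ) : pcomm (a κ i) (a κ j) = c κ (i - j) := by
  rw [a, a, pcomm_ofVec, translationCocycle_form, translationCocycle_form, convForm_sub_swap,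
    convForm_single_single, one_smul, one_smul, c]

lemma commute_c (i : ℤ) (g : HallExtension κ) : Commute (c κ i) g := commute_ofCen _ g

lemma closure_t_a (h : AddSubgroup.closure (Set.range (oddPart κ)) = ⊤) :
    Subgroup.closure {t κ, a κ 0} = ⊤ := by
  set K := Subgroup.closure {t κ, a κ 0}
  have ht : t κ ∈ K := Subgroup.subset_closure (by simp)
  have ha (i : ℤ) : a κ i ∈ K := by
    rw [← add_zero i, ← t_zpow_conj_a]
    exact K.mul_mem (K.mul_mem (K.zpow_mem ht i) (Subgroup.subset_closure (by simp)))
      (K.inv_mem (K.zpow_mem ht i))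
  have hc (i : ℤ) : c κ i ∈ K := by
    rw [← sub_zero i, ← pcomm_a, pcomm]
    exact K.mul_mem (K.mul_mem (K.mul_mem (K.inv_mem (ha _)) (K.inv_mem (ha _))) (ha _)) (ha _)
  refine eq_top_of_mem closure_range_single (by rintro _ ⟨i, rfl⟩; exact ha i) (fun z => ?_)
    fun k => t_zpow κ k.toAdd ▸ K.zpow_mem ht _
  have hz : z.toAdd ∈ AddSubgroup.closure (Set.range (oddPart κ)) := h ▸ AddSubgroup.mem_top _
  refine (AddSubgroup.closure_le (Subgroup.toAddSubgroup' (K.comap (ofCen _)))).2 ?_ hz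
  rintro _ ⟨i, rfl⟩
  exact hc i

/-- The images of the generators of Hall's group. -/
noncomputable def genMap : Gen → HallExtension κ
  | .t => t κ
  | .a i => a κ i
  | .c i => c κ i

lemma lift_genMap_eq_one : ∀ x ∈ hallRels, FreeGroup.lift (genMap κ) x = 1 := by
  have hconj (i : ℤ) : t κ * a κ i * (t κ)⁻¹ = a κ (i + 1) := by
    simpa only [zpow_one, add_comm] using t_zpow_conj_a κ 1 i
  have hcomm (i : ℤ) (g : HallExtension κ) : pcomm (c κ i) g = 1 :=
    pcomm_eq_one_iff.2 (commute_c κ i g)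
  rintro x ((((⟨i, rfl⟩ | ⟨i, rfl⟩) | ⟨p, rfl⟩) | ⟨p, rfl⟩) | ⟨p, rfl⟩)
  · simp [genMap, hconj]
  · simp [genMap, ← (commute_c κ i _).eq]
  · simp [genMap, map_pcomm, pcomm_a]
  · simp [genMap, map_pcomm, hcomm]
  · simp [genMap, map_pcomm, hcomm]

/-- The projection from Hall's group. -/
noncomputable def hallHom : G₀ →* HallExtension κ :=
  PresentedGroup.toGroup (lift_genMap_eq_one κ)

lemma hallHom_surjective (h : AddSubgroup.closure (Set.range (oddPart κ)) = ⊤) :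
    Function.Surjective (hallHom κ) := by
  refine surjective_of_closure_eq_top (closure_t_a κ h) ?_
  rintro x (rfl | rfl)
  · exact ⟨PresentedGroup.of Gen.t, PresentedGroup.toGroup.of _⟩
  · exact ⟨PresentedGroup.of (Gen.a 0), PresentedGroup.toGroup.of _⟩

lemma wordNormLe_c (N : ℕ) : WordNormLe {t κ, a κ 0} (c κ N) (4 * N + 4) := by
  have ht : WordNormLe {t κ, a κ 0} (t κ ^ N) (N * 1) := (WordNormLe.of_mem (by simp)).pow N
  have ha : WordNormLe {t κ, a κ 0} (a κ 0) 1 := .of_mem (by simp)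
  have htranslate : t κ ^ N * a κ 0 * (t κ ^ N)⁻¹ = a κ N := by
    simpa only [zpow_natCast, add_zero] using t_zpow_conj_a κ N 0
  rw [← sub_zero (N : ℤ), ← pcomm_a, ← htranslate]
  exact (((ht.mul ha).mul ht.inv).pcomm ha).mono (by omega)

/-- Modulo `K` the generators `a i` and `a (i + D)` agree, hence so do `c i` and `c (i + D)`. -/
lemma c_mem_of_index_dvd {K : Subgroup (HallExtension κ)} [K.Normal] {i D : ℤ}
    (hD : (K.index : ℤ) ∣ D) (h : oddPart κ (i + D) = 0) : c κ i ∈ K := by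
  let q := QuotientGroup.mk' K
  have htD : q (t κ ^ D) = 1 := by
    obtain ⟨n, rfl⟩ := hD
    refine (QuotientGroup.eq_one_iff _).2 ?_
    rw [zpow_mul, zpow_natCast]
    exact K.zpow_mem (K.pow_index_mem _) n
  have ha : q (a κ (i + D)) = q (a κ i) := by
    rw [add_comm, ← t_zpow_conj_a, map_mul, map_mul, map_inv, htD, one_mul, inv_one, mul_one]
  have hc (j : ℤ) : q (c κ j) = pcomm (q (a κ j)) (q (a κ 0)) := by
    rw [← map_pcomm, pcomm_a, sub_zero]
  refine (QuotientGroup.eq_one_iff _).1 (show q (c κ i) = 1 from ?_)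
  rw [hc, ← ha, ← hc, c, h, ofAdd_zero, map_one, map_one]

end HallExtension

section Marks

open Filter Function HallExtension

lemma single_mem_commImage {ι : Type*} {κ : ℤ → ι →₀ ℤ} {u : ι} {x y j : ℤ} {v : ℤ →₀ ℤ}
    (h : ∀ i ∈ v.support, oddPart κ (x + (j - i)) - oddPart κ (y + (j - i)) =
      if i = j then Finsupp.single u 1 else 0) :
    Finsupp.single u (v j) ∈ commImage κ v := by
  have hsum (z : ℤ) : convForm ℤ (oddPart κ) (Finsupp.single (z + j) 1) v =
      ∑ i ∈ v.support, v i • oddPart κ (z + (j - i)) := by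
    simp [convForm, Finsupp.linearCombination_apply, Finsupp.sum, add_sub_assoc]
  refine ⟨Finsupp.single (x + j) 1 - Finsupp.single (y + j) 1, ?_⟩
  calc convForm ℤ (oddPart κ) (Finsupp.single (x + j) 1 - Finsupp.single (y + j) 1) v
      = ∑ i ∈ v.support, v i • (if i = j then Finsupp.single u 1 else 0) := by
        rw [map_sub, LinearMap.sub_apply, hsum, hsum, ← Finset.sum_sub_distrib]
        exact Finset.sum_congr rfl fun i hi => by rw [← smul_sub, h i hi]
    _ = Finsupp.single u (v j) := by
        simp only [smul_ite, smul_zero, Finset.sum_ite_eq', Finsupp.smul_single, smul_eq_mul,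
          mul_one, Finsupp.mem_support_iff, ite_not, ite_eq_right_iff]
        exact fun hj => by rw [hj, Finsupp.single_zero]

/-- The indicator function of the residue class of `2 ^ u` modulo `2 ^ (u + ρ u + 3)`. -/
def markCoeff (ρ : ℕ → ℕ) (u : ℕ) (j : ℤ) : ℤ :=
  if j ≡ 2 ^ u [ZMOD 2 ^ (u + ρ u + 3)] then 1 else 0

variable {ρ : ℕ → ℕ} {u w : ℕ} {j : ℤ}

lemma markCoeff_periodic (ρ : ℕ → ℕ) (u : ℕ) :
    Periodic (markCoeff ρ u) (2 ^ (u + ρ u + 3)) := fun j =>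
  if_congr (by rw [Int.ModEq, Int.ModEq, Int.add_emod_right]) rfl rfl

lemma markCoeff_two_pow_mul (ρ : ℕ → ℕ) (u : ℕ) (b : ℤ) :
    markCoeff ρ u (2 ^ u * b) = if (2 : ℤ) ^ (ρ u + 3) ∣ 1 - b then 1 else 0 := by
  have hsub : (2 : ℤ) ^ u - 2 ^ u * b = 2 ^ u * (1 - b) := by ring
  simp only [markCoeff, Int.modEq_iff_dvd, hsub, add_assoc, pow_add _ u,
    mul_dvd_mul_iff_left (pow_ne_zero u (two_ne_zero' ℤ))]

lemma exists_odd_of_markCoeff_ne_zero (h : markCoeff ρ u j ≠ 0) :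
    ∃ b : ℤ, Odd b ∧ j = 2 ^ u * b := by
  have hj : j ≡ 2 ^ u [ZMOD 2 ^ (u + ρ u + 3)] := by_contra fun hj => h (if_neg hj)
  obtain ⟨n, hn⟩ := hj.dvd
  exact ⟨1 - 2 ^ (ρ u + 3) * n, odd_one.sub_even (Int.even_mul.2 (Or.inl
    (even_two.pow_of_ne_zero (by omega)))), by linear_combination -hn⟩

/-- The kernel recording in its coordinate `u` whether `j` lies in the residue class of `2 ^ u`
modulo `2 ^ (u + ρ u + 3)`. -/
noncomputable def mark (ρ : ℕ → ℕ) (j : ℤ) : ℕ →₀ ℤ :=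
  Finsupp.onFinset (Finset.range j.natAbs) (markCoeff ρ · j) fun u hu => by
    obtain ⟨b, hb, rfl⟩ := exists_odd_of_markCoeff_ne_zero hu
    rw [Finset.mem_range, Int.natAbs_mul, Int.natAbs_pow]
    exact Nat.lt_two_pow_self.trans_le (Nat.le_mul_of_pos_right _ hb.natAbs.pos)

lemma oddPart_mark_apply (ρ : ℕ → ℕ) (j : ℤ) (u : ℕ) :
    oddPart (mark ρ) j u = markCoeff ρ u j - markCoeff ρ u (-j) := rfl

lemma oddPart_mark_periodic (ρ : ℕ → ℕ) (u : ℕ) :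
    Periodic (oddPart (mark ρ) · u) (2 ^ (u + ρ u + 3)) :=
  oddPart_periodic (κ := markCoeff ρ u) (markCoeff_periodic ρ u)

lemma exists_odd_of_oddPart_mark_ne_zero (h : oddPart (mark ρ) j u ≠ 0) :
    ∃ b : ℤ, Odd b ∧ j = 2 ^ u * b := by
  by_cases hj : markCoeff ρ u j = 0
  · rw [oddPart_mark_apply, hj, zero_sub, neg_ne_zero] at h
    obtain ⟨b, hb, hjb⟩ := exists_odd_of_markCoeff_ne_zero h
    exact ⟨-b, hb.neg, by rw [mul_neg, ← hjb, neg_neg]⟩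
  · exact exists_odd_of_markCoeff_ne_zero hj

lemma le_of_two_pow_dvd {b : ℤ} (hb : Odd b) (h : (2 : ℤ) ^ w ∣ 2 ^ u * b) : w ≤ u :=
  (Nat.pow_dvd_pow_iff_le_right Nat.one_lt_two).1 (by
    exact_mod_cast ((Int.isCoprime_two_left.2 hb).pow_left (m := w)).dvd_of_dvd_mul_right h)

lemma oddPart_mark_two_pow_mul (ρ : ℕ → ℕ) (u : ℕ) {b : ℤ} (hb : Odd b) :
    oddPart (mark ρ) (2 ^ u * b) = Finsupp.single u
      ((if (2 : ℤ) ^ (ρ u + 3) ∣ 1 - b then 1 else 0) -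
        if (2 : ℤ) ^ (ρ u + 3) ∣ 1 + b then 1 else 0) := by
  ext w
  rcases eq_or_ne w u with rfl | hwu
  · rw [Finsupp.single_eq_same, oddPart_mark_apply, ← mul_neg, markCoeff_two_pow_mul,
      markCoeff_two_pow_mul, sub_neg_eq_add]
  · rw [Finsupp.single_eq_of_ne hwu]
    by_contra h
    obtain ⟨b', hb', hbb'⟩ := exists_odd_of_oddPart_mark_ne_zero h
    exact hwu ((le_of_two_pow_dvd hb ⟨b', hbb'⟩).antisymm
      (le_of_two_pow_dvd hb' ⟨b, hbb'.symm⟩))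

lemma oddPart_mark_two_pow (ρ : ℕ → ℕ) (u : ℕ) :
    oddPart (mark ρ) (2 ^ u) = Finsupp.single u 1 := by
  have h4 : (4 : ℤ) ∣ 2 ^ (ρ u + 3) := ⟨2 ^ (ρ u + 1), by ring⟩
  have hdvd : ¬ (2 : ℤ) ^ (ρ u + 3) ∣ 2 := fun h =>
    absurd (h4.trans h) (by decide)
  simpa [hdvd] using oddPart_mark_two_pow_mul ρ u odd_one

lemma oddPart_mark_add_half (ρ : ℕ → ℕ) (u : ℕ) {b : ℤ} (hb : Odd b) :
    oddPart (mark ρ) (2 ^ u + 2 ^ (u + ρ u + 2) * b) = 0 := by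
  have heven : Even ((2 : ℤ) ^ (ρ u + 2)) := even_two.pow_of_ne_zero (by omega)
  have hsub : ¬ (2 : ℤ) ^ (ρ u + 3) ∣ 1 - (1 + 2 ^ (ρ u + 2) * b) := by
    rw [sub_add_cancel_left, dvd_neg, pow_succ _ (ρ u + 2),
      mul_dvd_mul_iff_left (pow_ne_zero _ two_ne_zero)]
    exact fun h => Int.not_even_iff_odd.2 hb (even_iff_two_dvd.2 h)
  have hadd : ¬ (2 : ℤ) ^ (ρ u + 3) ∣ 1 + (1 + 2 ^ (ρ u + 2) * b) := fun h => by
    have h4 : (4 : ℤ) ∣ 2 ^ (ρ u + 2) := ⟨2 ^ ρ u, by ring⟩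
    have h4' := ((h4.trans (pow_dvd_pow _ (Nat.le_succ _))).trans h)
    rw [← add_assoc, Int.dvd_add_left (h4.mul_right b)] at h4'
    exact absurd h4' (by decide)
  rw [show (2 : ℤ) ^ u + 2 ^ (u + ρ u + 2) * b = 2 ^ u * (1 + 2 ^ (ρ u + 2) * b) by ring,
    oddPart_mark_two_pow_mul ρ u (odd_one.add_even (heven.mul_right b)), if_neg hsub, if_neg hadd,
    sub_zero, Finsupp.single_zero]

/-- For `δ ≠ 0`, half the period of the coordinate `u` is a multiple of the periods of the preceding
coordinates, while the coordinates from `u` on vanish off the multiples of `2 ^ u`. -/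
lemma oddPart_mark_sub_half (hρ : Monotone ρ) {δ : ℤ} (hδ : |δ| < 2 ^ u) :
    oddPart (mark ρ) (2 ^ u + δ) - oddPart (mark ρ) (2 ^ u + 2 ^ (u + ρ u + 2) + δ) =
      if δ = 0 then Finsupp.single u 1 else 0 := by
  split_ifs with h
  · have hhalf := oddPart_mark_add_half ρ u odd_one
    rw [mul_one] at hhalf
    rw [h, add_zero, add_zero, hhalf, oddPart_mark_two_pow, sub_zero]
  ext w
  rw [Finsupp.sub_apply, Finsupp.zero_apply]
  rcases lt_or_ge w u with hw | hw
  · obtain ⟨n, hn⟩ : (2 : ℤ) ^ (w + ρ w + 3) ∣ 2 ^ (u + ρ u + 2) :=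
      pow_dvd_pow _ (by have := hρ hw.le; omega)
    rw [sub_eq_zero, add_right_comm, hn, mul_comm]
    exact ((oddPart_mark_periodic ρ w).int_mul n _).symm
  · have hzero (i : ℤ) (hi : (2 : ℤ) ^ u ∣ i) : oddPart (mark ρ) (i + δ) w = 0 := by
      by_contra hne
      obtain ⟨b, -, hb⟩ := exists_odd_of_oddPart_mark_ne_zero hne
      exact h (Int.eq_zero_of_abs_lt_dvd ((dvd_add_right hi).1
        (hb ▸ (pow_dvd_pow _ hw).mul_right b)) hδ)
    rw [hzero _ dvd_rfl, hzero _ (dvd_add dvd_rfl (pow_dvd_pow _ (by omega))), sub_zero]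

lemma eventually_single_apply_mem_commImage (hρ : Monotone ρ) (v : ℤ →₀ ℤ) :
    ∀ᶠ u in cofinite, ∀ j, Finsupp.single u (v j) ∈ commImage (mark ρ) v := by
  rw [Nat.cofinite_eq_atTop]
  filter_upwards [(eventually_all_finset v.support).2 fun i _ =>
    (eventually_all_finset v.support).2 fun j _ => eventually_ge_atTop (j - i).natAbs] with u hu j
  by_cases hj : j ∈ v.support
  swap
  · rw [Finsupp.notMem_support_iff.1 hj, Finsupp.single_zero]
    exact zero_mem _
  refine single_mem_commImage (x := 2 ^ u) (y := 2 ^ u + 2 ^ (u + ρ u + 2)) fun i hi => ?_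
  have hlt : |j - i| < 2 ^ u := by
    rw [Int.abs_eq_natAbs]
    exact_mod_cast (hu i hi j hj).trans_lt Nat.lt_two_pow_self
  simp only [oddPart_mark_sub_half hρ hlt, sub_eq_zero, eq_comm]

lemma mark_conjSep (hρ : Monotone ρ) : ConjSep (HallExtension (mark ρ)) :=
  hallExtension_conjSep (fun u => ⟨2 ^ (u + ρ u + 3), by positivity, by
    exact_mod_cast markCoeff_periodic ρ u⟩) (eventually_single_apply_mem_commImage hρ)

lemma closure_range_oddPart_mark (ρ : ℕ → ℕ) :
    AddSubgroup.closure (Set.range (oddPart (mark ρ))) = ⊤ := by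
  rw [eq_top_iff, ← closure_range_single, AddSubgroup.closure_le]
  rintro _ ⟨u, rfl⟩
  exact AddSubgroup.subset_closure ⟨2 ^ u, oddPart_mark_two_pow ρ u⟩

lemma c_two_pow_ne_one (ρ : ℕ → ℕ) (u : ℕ) : c (mark ρ) (2 ^ u) ≠ 1 := fun h => by
  have hone := CentralExtension.ofCen_injective (h.trans (map_one _).symm)
  rw [oddPart_mark_two_pow, ofAdd_eq_one, Finsupp.single_eq_zero] at hone
  exact one_ne_zero hone

lemma le_index_of_c_two_pow_notMem {K : Subgroup (HallExtension (mark ρ))} [K.Normal]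
    [K.FiniteIndex] (hK : c (mark ρ) (2 ^ u) ∉ K) : ρ u ≤ K.index := by
  by_contra! hlt
  obtain ⟨s, b, hb, hindex⟩ := Nat.exists_eq_two_pow_mul_odd
    (Subgroup.FiniteIndex.index_ne_zero (H := K))
  have hs : s < ρ u := calc
    s < 2 ^ s := Nat.lt_two_pow_self
    _ ≤ K.index := hindex ▸ Nat.le_mul_of_pos_right _ hb.pos
    _ < ρ u := hlt
  refine hK (c_mem_of_index_dvd _ (D := 2 ^ (u + ρ u + 2) * b) ?_
    (oddPart_mark_add_half ρ u (by exact_mod_cast hb)))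
  rw [hindex, Nat.cast_mul, Nat.cast_pow, Nat.cast_ofNat]
  exact mul_dvd_mul_right (pow_dvd_pow _ (by omega)) _

lemma exists_two_pow_scale {n : ℕ} (hn : 8 ≤ n) :
    ∃ u, 4 * 2 ^ u + 4 ≤ n ∧ n ≤ 8 * 2 ^ u + 4 := by
  have hle := Nat.pow_log_le_self 2 (x := (n - 4) / 4) (by omega)
  have hlt := Nat.lt_pow_succ_log_self Nat.one_lt_two ((n - 4) / 4)
  rw [pow_succ] at hlt
  exact ⟨Nat.log 2 ((n - 4) / 4), by omega, by omega⟩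

lemma exists_wordNormLe_forall_le_index {f : ℕ → ℕ} (hf : Monotone f)
    (hρ : ∀ u, f (8 * 2 ^ u + 4) ≤ ρ u) {n : ℕ} (hn : 8 ≤ n) :
    ∃ g : HallExtension (mark ρ), g ≠ 1 ∧ WordNormLe {t (mark ρ), a (mark ρ) 0} g n ∧
      ∀ K : Subgroup (HallExtension (mark ρ)), K.Normal → K.FiniteIndex → g ∉ K →
        f n ≤ K.index := by
  obtain ⟨u, hle, hge⟩ := exists_two_pow_scale hn
  refine ⟨c (mark ρ) (2 ^ u), c_two_pow_ne_one ρ u, ?_, fun K _ _ hK =>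
    ((hf hge).trans (hρ u)).trans (le_index_of_c_two_pow_notMem hK)⟩
  exact_mod_cast (wordNormLe_c (mark ρ) (2 ^ u)).mono hle

end Marks

section Presentation

open CentralExtension

variable {G H P Q : Type*} [Group G] [Group H] [Group P] [Group Q]

/-- The commutator of the translate `x ^ j * y * x ^ (-j)` of `y` with `y`. -/
def shiftComm (x y : G) (j : ℤ) : G := pcomm (x ^ j * y * (x ^ j)⁻¹) y

lemma map_shiftComm (φ : G →* H) (x y : G) (j : ℤ) :
    φ (shiftComm x y j) = shiftComm (φ x) (φ y) j := by
  simp only [shiftComm, map_pcomm, map_mul, map_inv, map_zpow]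

lemma commute_translates {x y : G} (h : ∀ n : ℕ, shiftComm x y n = 1) (i j : ℤ) :
    Commute (x ^ i * y * (x ^ i)⁻¹) (x ^ j * y * (x ^ j)⁻¹) := by
  wlog hij : j ≤ i generalizing i j
  · exact (this j i (le_of_not_ge hij)).symm
  obtain ⟨n, rfl⟩ := Int.le.dest hij
  have hn := (pcomm_eq_one_iff.1 (h n)).map (MulAut.conj (x ^ j))
  simpa only [MulAut.conj_apply, zpow_add, mul_inv_rev, mul_assoc] using hn

lemma commute_of_closure_eq_top {g : G} {s : Set G} (hs : Subgroup.closure s = ⊤)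
    (h : ∀ x ∈ s, Commute g x) (x : G) : Commute g x := by
  have hle : Subgroup.closure s ≤ Subgroup.centralizer {g} := (Subgroup.closure_le _).2
    fun y hy => Subgroup.mem_centralizer_singleton_iff.2 (h y hy).symm.eq
  exact (Subgroup.mem_centralizer_singleton_iff.1 (hle (hs ▸ Subgroup.mem_top x))).symm

namespace HallExtension

variable {ι : Type*} {κ : ℤ → ι →₀ ℤ}

lemma shiftComm_t_a (κ : ℤ → ι →₀ ℤ) (j : ℤ) : shiftComm (t κ) (a κ 0) j = c κ j := by
  rw [shiftComm, t_zpow_conj_a, pcomm_a, add_zero, sub_zero]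

/-- Modulo its center `HallExtension κ` is the restricted wreath product `ℤ ≀ ℤ`, presented by the
commutation of the translates of `a 0`. -/
lemma exists_hom_of_commute_translates (κ : ℤ → ι →₀ ℤ) {x y : Q}
    (h : ∀ i j : ℤ, Commute (x ^ i * y * (x ^ i)⁻¹) (x ^ j * y * (x ^ j)⁻¹)) :
    ∃ ψ : HallExtension κ →* Q, ψ (t κ) = x ∧ ψ (a κ 0) = y := by
  obtain ⟨μ, hμ⟩ := exists_hom_of_commute _ h
  have hconj (k : ℤ) (v : ℤ →₀ ℤ) :
      x ^ k * μ (.ofAdd v) = μ (.ofAdd (shiftBy ℤ k v)) * x ^ k := by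
    rw [← mul_inv_eq_iff_eq_mul]
    have : (MulAut.conj (x ^ k)).toMonoidHom.comp μ =
        μ.comp (AddMonoidHom.toMultiplicative (shiftBy ℤ k).toAddMonoidHom) := by
      refine Finsupp.mulHom_ext fun i s => ?_
      have hs : x ^ k * (x ^ i * y * (x ^ i)⁻¹) ^ s * (x ^ k)⁻¹ =
          (x ^ (k + i) * y * (x ^ (k + i))⁻¹) ^ s := by
        rw [← conj_zpow]
        simp only [zpow_add, mul_inv_rev, mul_assoc]
      simpa [hμ, -map_zpow] using hs
    exact DFunLike.congr_fun this (.ofAdd v)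
  refine ⟨MonoidHom.mk' (fun g => μ (.ofAdd g.vec) * x ^ g.deg) fun g h => ?_, ?_, ?_⟩
  · rw [vec_mul, deg_mul, ofAdd_add, map_mul, zpow_add, translationCocycle_act, mul_assoc,
      ← mul_assoc _ (x ^ g.deg), ← hconj]
    simp only [mul_assoc]
  · simp [t]
  · simp [a, hμ]

variable {x y : P} {φ : P →* HallExtension κ}

lemma map_eq_one_of_map_eq_one (hxy : Subgroup.closure {x, y} = ⊤) (hx : φ x = t κ)
    (hy : φ y = a κ 0) {θ : P →* Q} (hθ : ∀ n : ℕ, θ (shiftComm x y n) = 1) {p : P}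
    (hp : φ p = 1) : θ p = 1 := by
  obtain ⟨ψ, hψx, hψy⟩ := exists_hom_of_commute_translates κ
    (commute_translates fun n => (map_shiftComm θ x y n).symm.trans (hθ n))
  have hθψ : θ = ψ.comp φ := by
    refine MonoidHom.eq_of_eqOn_dense hxy ?_
    rintro z (rfl | rfl)
    · rw [MonoidHom.comp_apply, hx, hψx]
    · rw [MonoidHom.comp_apply, hy, hψy]
  rw [hθψ, MonoidHom.comp_apply, hp, map_one]

/-- Dividing by the image of `E` leaves the translates of `y` commuting, so the kernel of `φ` lies
in that image, on which `φ` is injective. -/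
lemma injective_of_shiftComm_mem_range (hxy : Subgroup.closure {x, y} = ⊤) (hx : φ x = t κ)
    (hy : φ y = a κ 0) {E : Multiplicative (ι →₀ ℤ) →* P} (hE : ∀ z p, Commute (E z) p)
    (hφE : ∀ z, φ (E z) = ofCen _ z) (hcomm : ∀ n : ℕ, shiftComm x y n ∈ E.range) :
    Function.Injective φ := by
  have : E.range.Normal := ⟨by
    rintro _ ⟨z, rfl⟩ p
    exact ⟨z, by rw [← (hE z p).eq, mul_inv_cancel_right]⟩⟩
  refine (injective_iff_map_eq_one φ).2 fun p hp => ?_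
  obtain ⟨z, rfl⟩ : p ∈ E.range := (QuotientGroup.eq_one_iff p).1
    (map_eq_one_of_map_eq_one hxy hx hy (θ := QuotientGroup.mk' E.range)
      (fun n => (QuotientGroup.eq_one_iff _).2 (hcomm n)) hp)
  rw [hφE] at hp
  rw [ofCen_injective (hp.trans (map_one _).symm), map_one]

lemma c_two_pow_mul (ρ : ℕ → ℕ) (v : ℕ) {b : ℤ} (hb : Odd b) :
    c (mark ρ) (2 ^ v * b) = c (mark ρ) (2 ^ v) ^ oddPart (mark ρ) (2 ^ v * b) v := by
  rw [c, c, ← map_zpow, ← ofAdd_zsmul, oddPart_mark_two_pow, oddPart_mark_two_pow_mul ρ v hb,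
    Finsupp.smul_single, Finsupp.single_eq_same, smul_eq_mul, mul_one]

lemma injective_of_shiftComm_relations {ρ : ℕ → ℕ} {φ : P →* HallExtension (mark ρ)}
    (hxy : Subgroup.closure {x, y} = ⊤) (hx : φ x = t (mark ρ)) (hy : φ y = a (mark ρ) 0)
    (hcx : ∀ n : ℕ, Commute (shiftComm x y n) x) (hcy : ∀ n : ℕ, Commute (shiftComm x y n) y)
    (hpow : ∀ v q : ℕ, shiftComm x y (2 ^ v * (2 * q + 1)) =
      shiftComm x y (2 ^ v) ^ oddPart (mark ρ) (2 ^ v * (2 * q + 1)) v) :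
    Function.Injective φ := by
  have hcentral (v : ℕ) (p : P) : Commute (shiftComm x y (2 ^ v)) p :=
    commute_of_closure_eq_top hxy (by
      rintro z (rfl | rfl)
      · exact_mod_cast hcx (2 ^ v)
      · exact_mod_cast hcy (2 ^ v)) p
  obtain ⟨E, hE⟩ := exists_hom_of_commute (fun v : ℕ => shiftComm x y (2 ^ v))
    fun v w => hcentral v _
  refine injective_of_shiftComm_mem_range hxy hx hy (E := E) (fun z p => ?_)
    (DFunLike.congr_fun (Finsupp.mulHom_ext (f := φ.comp E) fun v s => ?_)) fun n => ?_
  · have hconj : (MulAut.conj p).toMonoidHom.comp E = E := Finsupp.mulHom_ext fun v s => by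
      simp [hE, -map_zpow, ← ((hcentral v p).zpow_left s).eq]
    exact (mul_inv_eq_iff_eq_mul.1 (DFunLike.congr_fun hconj z)).symm
  · rw [MonoidHom.comp_apply, hE, map_zpow, map_shiftComm, hx, hy, shiftComm_t_a, c,
      oddPart_mark_two_pow, ← map_zpow, ← ofAdd_zsmul, Finsupp.smul_single, smul_eq_mul, mul_one]
  · rcases eq_or_ne n 0 with rfl | hn
    · have hzero : shiftComm x y (0 : ℕ) = 1 := pcomm_eq_one_iff.2 (by simp)
      exact hzero ▸ one_mem _
    · obtain ⟨v, _, ⟨q, rfl⟩, rfl⟩ := Nat.exists_eq_two_pow_mul_odd hn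
      push_cast
      rw [hpow, ← hE]
      exact ⟨_, rfl⟩

end HallExtension

end Presentation

section Words

open HallExtension

variable {k : ℕ} {G α : Type*} [Group G] [Primcodable α]

lemma exists_computable_range_eq [Inhabited α] {β : Type*} [Primcodable β] {f : α → β}
    (hf : Computable f) : ∃ g : ℕ → β, Computable g ∧ Set.range g = Set.range f := by
  refine ⟨fun n => f ((Encodable.decode n).getD default), hf.comp
    (Computable.decode.option_getD (Computable.const _)), Function.Surjective.range_comp
      (fun x => ⟨Encodable.encode x, ?_⟩) f⟩
  simp only [Encodable.encodek, Option.getD_some]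

lemma RecursivelyPresented.of_computable [Inhabited α] {w : α → List (Fin k × Bool)}
    (hw : Computable w) (e : G ≃* PresentedGroup (Set.range fun i => FreeGroup.mk (w i))) :
    RecursivelyPresented G := by
  obtain ⟨L, hL, hrange⟩ := exists_computable_range_eq hw
  refine ⟨k, L, hL, ⟨?_⟩⟩
  rwa [show (Set.range fun m => FreeGroup.mk (L m)) = Set.range fun i => FreeGroup.mk (w i) by
    rw [Set.range_comp' FreeGroup.mk, hrange, ← Set.range_comp']]

/-- A word representing the commutator of the elements represented by `w₁` and `w₂`. -/
def pcommWord (w₁ w₂ : List (Fin k × Bool)) : List (Fin k × Bool) :=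
  FreeGroup.invRev w₁ ++ FreeGroup.invRev w₂ ++ w₁ ++ w₂

/-- The word `x ^ n * y * x ^ (-n)` in the letters `x = 0` and `y = 1`. -/
def translateWord (n : ℕ) : List (Fin 2 × Bool) :=
  List.replicate n (0, true) ++ [(1, true)] ++ List.replicate n (0, false)

/-- The word for `shiftComm x y n` in the letters `x = 0` and `y = 1`. -/
def commWord (n : ℕ) : List (Fin 2 × Bool) := pcommWord (translateWord n) [(1, true)]

/-- The defining relations of `HallExtension (mark ρ)`: the commutators `shiftComm x y n` are
central, and those at distance `2 ^ v * (2 * q + 1)` are powers of the one at distance `2 ^ v`. -/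
def relWord (ρ : ℕ → ℕ) : ℕ ⊕ ℕ ⊕ ℕ × ℕ → List (Fin 2 × Bool)
  | .inl n => pcommWord (commWord n) [(0, true)]
  | .inr (.inl n) => pcommWord (commWord n) [(1, true)]
  | .inr (.inr (v, q)) =>
    commWord (2 ^ v * (2 * q + 1)) ++
      ((if 2 ^ (ρ v + 3) ∣ 2 * q then FreeGroup.invRev (commWord (2 ^ v)) else []) ++
        if 2 ^ (ρ v + 3) ∣ 2 * q + 2 then commWord (2 ^ v) else [])

section Computability

lemma primrec_two_pow : Primrec fun n : ℕ => 2 ^ n :=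
  (Primrec₂.unpaired'.1 Nat.Primrec.pow).comp (Primrec.const 2) Primrec.id

lemma primrec_replicate (x : α) : Primrec fun n : ℕ => List.replicate n x :=
  (Primrec.list_map Primrec.list_range (Primrec₂.const x)).of_eq fun n => by
    rw [List.map_const', List.length_range]

lemma primrec_invRev : Primrec (FreeGroup.invRev : List (Fin k × Bool) → List (Fin k × Bool)) :=
  Primrec.list_reverse.comp (Primrec.list_map Primrec.id
    (Primrec.pair (Primrec.fst.comp Primrec.snd)
      (Primrec.not.comp (Primrec.snd.comp Primrec.snd))).to₂)

lemma primrec_pcommWord :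
    Primrec₂ (pcommWord : List (Fin k × Bool) → List (Fin k × Bool) → List (Fin k × Bool)) :=
  Primrec.list_append.comp (Primrec.list_append.comp (Primrec.list_append.comp
    (primrec_invRev.comp Primrec.fst) (primrec_invRev.comp Primrec.snd)) Primrec.fst) Primrec.snd

lemma primrec_commWord : Primrec commWord :=
  primrec_pcommWord.comp (Primrec.list_append.comp (Primrec.list_append.comp
    (primrec_replicate _) (Primrec.const _)) (primrec_replicate _)) (Primrec.const _)

lemma computable_ite_dvd {m n : α → ℕ} {β : Type*} [Primcodable β] {f g : α → β}
    (hm : Computable m) (hn : Computable n) (hf : Computable f) (hg : Computable g) :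
    Computable fun x => if m x ∣ n x then f x else g x :=
  (Computable.cond (Primrec.beq.to_comp.comp (Primrec.nat_mod.to_comp.comp hn hm)
    (Computable.const 0)) hf hg).of_eq fun x => by
      simp only [Bool.cond_eq_ite, beq_iff_eq, Nat.dvd_iff_mod_eq_zero]

lemma computable_relWord {ρ : ℕ → ℕ} (hρ : Computable ρ) : Computable (relWord ρ) := by
  have hcentral (x : Fin 2 × Bool) : Computable fun n => pcommWord (commWord n) [x] :=
    (primrec_pcommWord.comp primrec_commWord (Primrec.const [x])).to_comp
  have hdouble : Computable fun p : ℕ × ℕ => 2 * p.2 :=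
    (Primrec.nat_mul.comp (Primrec.const 2) Primrec.snd).to_comp
  have hmod : Computable fun p : ℕ × ℕ => 2 ^ (ρ p.1 + 3) :=
    primrec_two_pow.to_comp.comp (Primrec.nat_add.to_comp.comp (hρ.comp Computable.fst)
      (Computable.const 3))
  have hbase : Computable fun p : ℕ × ℕ => commWord (2 ^ p.1) :=
    (primrec_commWord.comp (primrec_two_pow.comp Primrec.fst)).to_comp
  have hleft : Computable fun p : ℕ × ℕ => commWord (2 ^ p.1 * (2 * p.2 + 1)) :=
    primrec_commWord.to_comp.comp (Primrec.nat_mul.to_comp.comp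
      (primrec_two_pow.comp Primrec.fst).to_comp (Computable.succ.comp hdouble))
  have hpow : Computable fun p : ℕ × ℕ => relWord ρ (.inr (.inr p)) :=
    Primrec.list_append.to_comp.comp hleft (Primrec.list_append.to_comp.comp
      (computable_ite_dvd hmod hdouble (primrec_invRev.to_comp.comp hbase) (Computable.const []))
      (computable_ite_dvd hmod (Computable.succ.comp (Computable.succ.comp hdouble)) hbase
        (Computable.const [])))
  refine (Computable.sumCasesOn Computable.id ((hcentral (0, true)).comp Computable.snd).to₂
    (Computable.sumCasesOn Computable.snd ((hcentral (1, true)).comp Computable.snd).to₂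
      (hpow.comp Computable.snd).to₂).to₂).of_eq ?_
  rintro (n | n | p) <;> rfl

end Computability

section Evaluation

lemma mk_pcommWord (w₁ w₂ : List (Fin k × Bool)) :
    FreeGroup.mk (pcommWord w₁ w₂) = pcomm (FreeGroup.mk w₁) (FreeGroup.mk w₂) := by
  simp only [pcommWord, pcomm, ← FreeGroup.mul_mk, ← FreeGroup.inv_mk]

lemma mk_commWord (n : ℕ) :
    FreeGroup.mk (commWord n) = shiftComm (FreeGroup.of 0) (FreeGroup.of 1) n := by
  have hpow (b : Bool) :
      FreeGroup.mk (List.replicate n ((0 : Fin 2), b)) = FreeGroup.mk [(0, b)] ^ n := by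
    rw [FreeGroup.pow_mk, List.flatten_replicate_singleton]
  have hinv : FreeGroup.mk [((0 : Fin 2), false)] = (FreeGroup.of 0)⁻¹ := rfl
  rw [commWord, mk_pcommWord, translateWord, ← FreeGroup.mul_mk, ← FreeGroup.mul_mk, hpow, hpow,
    hinv, inv_pow, shiftComm, zpow_natCast]
  rfl

lemma mk_relWord_pow (ρ : ℕ → ℕ) (v q : ℕ) :
    FreeGroup.mk (relWord ρ (.inr (.inr (v, q)))) =
      shiftComm (FreeGroup.of 0) (FreeGroup.of 1) (2 ^ v * (2 * q + 1)) *
        (shiftComm (FreeGroup.of 0) (FreeGroup.of 1) (2 ^ v) ^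
          oddPart (mark ρ) (2 ^ v * (2 * q + 1)) v)⁻¹ := by
  have hsub : (2 : ℤ) ^ (ρ v + 3) ∣ 1 - (2 * q + 1) ↔ 2 ^ (ρ v + 3) ∣ 2 * q := by
    rw [sub_add_cancel_right, dvd_neg]
    exact_mod_cast Iff.rfl
  have hadd : (2 : ℤ) ^ (ρ v + 3) ∣ 1 + (2 * q + 1) ↔ 2 ^ (ρ v + 3) ∣ 2 * q + 2 := by
    rw [add_left_comm, one_add_one_eq_two]
    exact_mod_cast Iff.rfl
  rw [oddPart_mark_two_pow_mul ρ v (odd_two_mul_add_one _), Finsupp.single_eq_same, zpow_sub,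
    mul_inv_rev, inv_inv, relWord, ← FreeGroup.mul_mk, ← FreeGroup.mul_mk, mk_commWord]
  simp only [hsub, hadd]
  split_ifs <;> simp [mk_commWord, ← FreeGroup.inv_mk, ← FreeGroup.one_eq_mk]

lemma forall_map_mk_relWord_eq_one_iff (φ : FreeGroup (Fin 2) →* G) {x y : G}
    (hx : φ (FreeGroup.of 0) = x) (hy : φ (FreeGroup.of 1) = y) (ρ : ℕ → ℕ) :
    (∀ i, φ (FreeGroup.mk (relWord ρ i)) = 1) ↔
      (∀ n : ℕ, Commute (shiftComm x y n) x) ∧ (∀ n : ℕ, Commute (shiftComm x y n) y) ∧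
        ∀ v q : ℕ, shiftComm x y (2 ^ v * (2 * q + 1)) =
          shiftComm x y (2 ^ v) ^ oddPart (mark ρ) (2 ^ v * (2 * q + 1)) v := by
  have hcentral (n : ℕ) (i : Fin 2) : φ (FreeGroup.mk (pcommWord (commWord n) [(i, true)])) =
      pcomm (shiftComm x y n) (φ (FreeGroup.of i)) := by
    rw [mk_pcommWord, mk_commWord, map_pcomm, map_shiftComm, hx, hy, FreeGroup.of]
  simp only [Sum.forall, Prod.forall, mk_relWord_pow, map_mul, map_inv, map_zpow, map_shiftComm,
    hx, hy, mul_inv_eq_one, relWord.eq_1, relWord.eq_2, hcentral, pcomm_eq_one_iff]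

end Evaluation

lemma HallExtension.lift_mk_relWord_eq_one (ρ : ℕ → ℕ) :
    ∀ i, FreeGroup.lift ![t (mark ρ), a (mark ρ) 0] (FreeGroup.mk (relWord ρ i)) = 1 := by
  refine (forall_map_mk_relWord_eq_one_iff (x := t (mark ρ)) (y := a (mark ρ) 0) _
    FreeGroup.lift_apply_of FreeGroup.lift_apply_of ρ).2 ?_
  simp only [shiftComm_t_a]
  exact ⟨fun n => commute_c _ _ _, fun n => commute_c _ _ _,
    fun v q => c_two_pow_mul ρ v (odd_two_mul_add_one _)⟩

lemma HallExtension.recursivelyPresented {ρ : ℕ → ℕ} (hρ : Computable ρ) :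
    RecursivelyPresented (HallExtension (mark ρ)) := by
  set R : Set (FreeGroup (Fin 2)) := Set.range fun i => FreeGroup.mk (relWord ρ i)
  let φ : PresentedGroup R →* HallExtension (mark ρ) :=
    PresentedGroup.toGroup (Set.forall_mem_range.2 (lift_mk_relWord_eq_one ρ))
  set x : PresentedGroup R := PresentedGroup.of 0
  set y : PresentedGroup R := PresentedGroup.of 1
  have hx : φ x = t (mark ρ) := PresentedGroup.toGroup.of _
  have hy : φ y = a (mark ρ) 0 := PresentedGroup.toGroup.of _
  have hxy : Subgroup.closure {x, y} = ⊤ := by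
    rw [← PresentedGroup.closure_range_of R]
    congr 1
    ext z
    simp [Fin.exists_fin_two, x, y, eq_comm]
  obtain ⟨hcx, hcy, hpow⟩ := (forall_map_mk_relWord_eq_one_iff (PresentedGroup.mk R) rfl rfl ρ).1
    fun i => PresentedGroup.one_of_mem ⟨i, rfl⟩
  have hsurj : Function.Surjective φ := by
    refine surjective_of_closure_eq_top (closure_t_a _ (closure_range_oddPart_mark ρ)) ?_
    rintro _ (rfl | rfl)
    exacts [⟨x, hx⟩, ⟨y, hy⟩]
  exact .of_computable (computable_relWord hρ) (MulEquiv.ofBijective φ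
    ⟨injective_of_shiftComm_relations hxy hx hy hcx hcy hpow, hsurj⟩).symm

end Words

/-- For every increasing `f : ℕ → ℕ` there is a finitely generated,
torsion-free, `3`-step solvable, conjugacy separable quotient `G` of Hall's group with
`rf_G(n) ≥ f(n)` for all large `n`; if `f` is computable, `G` can be taken recursively
presented. -/
theorem stmt_11 (f : ℕ → ℕ) (hf : Monotone f) :
    ∃ (G : Type) (instG : Group G),
      @GoodGroup f G instG ∧ (Computable f → @RecursivelyPresented G instG) := by
  classical
  set ρ : ℕ → ℕ := fun u => f (8 * 2 ^ u + 4)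
  have hρ_mono : Monotone ρ := fun u w huw => hf (by gcongr; omega)
  have hgen := closure_range_oddPart_mark ρ
  let S : Finset (HallExtension (mark ρ)) := {HallExtension.t _, HallExtension.a _ 0}
  have hS : (S : Set (HallExtension (mark ρ))) = {HallExtension.t _, HallExtension.a _ 0} := by
    rw [Finset.coe_insert, Finset.coe_singleton]
  refine ⟨HallExtension (mark ρ), inferInstance, ⟨S, HallExtension.hallHom _,
    HallExtension.hallHom_surjective _ hgen, hS ▸ HallExtension.closure_t_a _ hgen,
    fun g => CentralExtension.not_isOfFinOrder, CentralExtension.derivedSeries_three,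
    mark_conjSep hρ_mono, 8, fun n hn => ?_⟩, fun hfc => HallExtension.recursivelyPresented ?_⟩
  · exact hS ▸ exists_wordNormLe_forall_le_index hf (fun _ => le_rfl) hn
  · exact hfc.comp (Primrec.nat_add.comp (Primrec.nat_mul.comp (Primrec.const 8) primrec_two_pow)
      (Primrec.const 4)).to_comp
end

section
/- Fix ε > 0. Let n > 0, let −n ≤ l₁ < ⋯ < l_k ≤ n and m₀ be integers with l_i ≢ l_j (mod m₀) for i ≠ j, and let f ∈ ℤ[X, X⁻¹] be a Laurent polynomial supported in degrees [−n, n] with f ∉ M = ℤX^{l₁} + ⋯ + ℤX^{l_k}. Then there exists an odd prime q < c·n^{1/2+ε} such that f ∉ M + I_q, where I_q = ⟨X^{lcm(q,m₀)} − 1⟩ ⊆ ℤ[X, X⁻¹]. -/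
open LaurentPolynomial

/-!
If `f ∈ M + I_q` for every `q` in a set `P` of odd primes, write `f = g_q + h_q` with `g_q ∈ M` and
`h_q ∈ I_q`. Every `I_q` lies in `J = ⟨X^m₀ - 1⟩`, and `M ∩ J = 0` because the exponents of `M` are
distinct modulo `m₀`; hence `g = g_q` does not depend on `q`, and `f - g` is divisible by
`(X^q - 1) / (X - 1)` for all `q ∈ P`. These polynomials are pairwise comaximal already over `ℤ`,
hence over every commutative ring, so `f - g`, which is supported in `[-n, n]`, vanishes as soon as
`∑ (q - 1) > 2n`. By Chebyshev's lower bound for `π`, the odd primes below a constant multiple of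
`n^{1/2+ε}` suffice.
-/

section GeometricSums

variable {R : Type*} [CommRing R]

theorem geomSum_dvd_geomSum {R : Type*} [CommSemiring R] (x : R) {m n : ℕ} (h : m ∣ n) :
    ∑ i ∈ Finset.range m, x ^ i ∣ ∑ i ∈ Finset.range n, x ^ i := by
  obtain ⟨k, rfl⟩ := h
  induction k with
  | zero => simp
  | succ k ih =>
    simp only [Nat.mul_succ, Finset.sum_range_add, pow_add, ← Finset.mul_sum]
    exact dvd_add ih (dvd_mul_left _ _)

theorem isCoprime_geomSum (x : R) {m n : ℕ} (h : m.Coprime n) :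
    IsCoprime (∑ i ∈ Finset.range m, x ^ i) (∑ i ∈ Finset.range n, x ^ i) := by
  obtain rfl | hn := eq_or_ne n 0
  · simpa [(Nat.coprime_zero_right m).1 h] using isCoprime_one_left
  obtain rfl | hn1 := eq_or_ne n 1
  · simpa using isCoprime_one_right
  -- If `m * k = n * j + 1`, the sum of length `m * k` is `1` plus `x` times that of length `n * j`.
  obtain ⟨k, -, hk⟩ := Nat.exists_mul_mod_eq_one_of_coprime h (by omega)
  obtain ⟨u, hu⟩ := geomSum_dvd_geomSum x (dvd_mul_right m k)
  obtain ⟨v, hv⟩ := geomSum_dvd_geomSum x (dvd_mul_right n (m * k / n))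
  refine ⟨u, -(x * v), ?_⟩
  have hsucc : n * (m * k / n) + 1 = m * k := by rw [← hk, Nat.div_add_mod]
  rw [← hsucc, geom_sum_succ, hv] at hu
  linear_combination -hu

theorem isCoprime_self_geomSum (x : R) {n : ℕ} (hn : n ≠ 0) :
    IsCoprime x (∑ i ∈ Finset.range n, x ^ i) := by
  obtain ⟨n, rfl⟩ := Nat.exists_eq_succ_of_ne_zero hn
  exact ⟨-∑ i ∈ Finset.range n, x ^ i, 1, by rw [geom_sum_succ]; ring⟩

theorem natDegree_geomSum_X {R : Type*} [Ring R] [Nontrivial R] {n : ℕ} (hn : n ≠ 0) :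
    (∑ i ∈ Finset.range n, (Polynomial.X : Polynomial R) ^ i).natDegree = n - 1 := by
  have h := congrArg Polynomial.natDegree (geom_sum_mul (Polynomial.X : Polynomial R) n)
  rw [← Polynomial.C_1,
    (Polynomial.monic_geom_sum_X hn).natDegree_mul (Polynomial.monic_X_sub_C 1),
    Polynomial.natDegree_X_sub_C, Polynomial.natDegree_X_pow_sub_C] at h
  exact Nat.eq_sub_of_add_eq h

end GeometricSums

theorem exists_mem_forall_sub_mem_of_disjoint {R N ι : Type*} [Ring R] [AddCommGroup N] [Module R N]
    {M J : Submodule R N} (hMJ : Disjoint M J) {s : Set ι} {I : ι → Submodule R N}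
    (hI : ∀ i ∈ s, I i ≤ J) {x : N} (hx : ∀ i ∈ s, x ∈ M ⊔ I i) :
    ∃ y ∈ M, ∀ i ∈ s, x - y ∈ I i := by
  obtain rfl | ⟨j, hj⟩ := s.eq_empty_or_nonempty
  · exact ⟨0, M.zero_mem, by simp⟩
  obtain ⟨y, hyM, z, hzj, rfl⟩ := Submodule.mem_sup.1 (hx j hj)
  refine ⟨y, hyM, fun i hi => ?_⟩
  obtain ⟨y', hyM', z', hzi, hsum⟩ := Submodule.mem_sup.1 (hx i hi)
  have hdiff : y - y' = z' - z := by
    rw [sub_eq_sub_iff_add_eq_add, ← hsum]; abel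
  have hyy' : y - y' = 0 := Submodule.disjoint_def.1 hMJ _ (M.sub_mem hyM hyM')
    (hdiff ▸ J.sub_mem (hI i hi hzi) (hI j hj hzj))
  rw [add_sub_cancel_left, ← sub_eq_zero.1 (hdiff.symm.trans hyy')]
  exact hzi

section LaurentPolynomials

open AddMonoidAlgebra (supported)

open Polynomial (X toLaurent)

variable {R : Type*} [CommRing R]

theorem toLaurent_dvd_toLaurent_iff {R : Type*} [CommSemiring R] {p r : Polynomial R}
    (hp : IsCoprime X p) : toLaurent p ∣ toLaurent r ↔ p ∣ r := by
  refine ⟨fun ⟨s, hs⟩ => ?_, map_dvd _⟩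
  obtain ⟨k, t, ht⟩ := exists_T_pow s
  have hdvd : p ∣ X ^ k * r := by
    refine ⟨t, Polynomial.toLaurent_injective ?_⟩
    rw [map_mul, map_mul, Polynomial.toLaurent_X_pow, hs, ht, T_mul, mul_assoc]
  exact hp.symm.pow_right.dvd_of_dvd_mul_left hdvd

theorem span_T_image_eq_supported {R : Type*} [Semiring R] (S : Set ℤ) :
    Submodule.span R (T '' S : Set R[T;T⁻¹]) = supported R R S :=
  (AddMonoidAlgebra.supported_eq_span_single R S).symm

theorem sum_C_mul_T_mem_supported {R : Type*} [Semiring R] (s : Finset ℤ) (γ : ℤ → R) :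
    ∑ i ∈ s, C (γ i) * T i ∈ supported R R (s : Set ℤ) :=
  Submodule.sum_mem _ fun i hi => (Finset.coe_subset.2 (support_C_mul_T (γ i) i)).trans <| by
    simpa using hi

theorem exists_T_mul_toLaurent_eq {R : Type*} [Semiring R] {a b : ℤ} {g : R[T;T⁻¹]}
    (hg : g ∈ supported R R (Set.Icc a b)) :
    ∃ p : Polynomial R, p.natDegree ≤ (b - a).toNat ∧ T a * toLaurent p = g := by
  rw [← span_T_image_eq_supported] at hg
  induction hg using Submodule.span_induction with
  | mem x hx =>
    obtain ⟨i, ⟨hai, hib⟩, rfl⟩ := hx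
    refine ⟨X ^ (i - a).toNat, (Polynomial.natDegree_X_pow_le _).trans (by omega), ?_⟩
    rw [Polynomial.toLaurent_X_pow, ← T_add, Int.toNat_of_nonneg (by omega), add_sub_cancel]
  | zero => exact ⟨0, by simp, by simp⟩
  | add x y _ _ hx hy =>
    obtain ⟨p, hp, rfl⟩ := hx
    obtain ⟨r, hr, rfl⟩ := hy
    exact ⟨p + r, Polynomial.natDegree_add_le_of_degree_le hp hr, by rw [map_add, mul_add]⟩
  | smul c x _ hx =>
    obtain ⟨p, hp, rfl⟩ := hx
    refine ⟨Polynomial.C c * p, (Polynomial.natDegree_C_mul_le _ _).trans hp, ?_⟩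
    rw [Polynomial.toLaurent_C_mul_eq, smul_eq_C_mul, T_mul, mul_assoc, ← T_mul]

theorem span_T_sub_one_le {m n : ℕ} (h : m ∣ n) :
    Ideal.span {(T n : R[T;T⁻¹]) - 1} ≤ Ideal.span {(T m : R[T;T⁻¹]) - 1} := by
  rw [Ideal.span_singleton_le_span_singleton]
  simpa only [T_pow, mul_one] using dvd_pow_sub_one_of_dvd (r := (T 1 : R[T;T⁻¹])) h

theorem disjoint_supported_span_T_sub_one {m : ℕ} {S : Set ℤ}
    (hS : Set.InjOn (Int.cast : ℤ → ZMod m) S) :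
    Disjoint (supported R R S)
      ((Ideal.span {(T m : R[T;T⁻¹]) - 1}).restrictScalars R) := by
  rw [Submodule.disjoint_def]
  intro g hgS hgm
  let fold := AddMonoidAlgebra.mapDomainRingHom R (Int.castAddHom (ZMod m))
  have hfoldT : fold (T m - 1) = 0 := by
    rw [map_sub, map_one, sub_eq_zero, AddMonoidAlgebra.one_def]
    simp only [fold, T, AddMonoidAlgebra.mapDomainRingHom_apply, AddMonoidAlgebra.mapDomain_single,
      Int.coe_castAddHom, Int.cast_natCast, ZMod.natCast_self]
  have hfold : fold g = 0 := by
    obtain ⟨h, rfl⟩ := Ideal.mem_span_singleton'.1 hgm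
    rw [map_mul, hfoldT, mul_zero]
  refine AddMonoidAlgebra.coeff_injective (Finsupp.mapDomain_injOn S hS hgS (by simp) ?_)
  simpa [fold] using congrArg AddMonoidAlgebra.coeff hfold

theorem eq_zero_of_forall_geomSum_X_dvd {P : Finset ℕ} (hcop : (P : Set ℕ).Pairwise Nat.Coprime)
    (hne : ∀ q ∈ P, q ≠ 0) {p : Polynomial R}
    (hdvd : ∀ q ∈ P, ∑ i ∈ Finset.range q, X ^ i ∣ p)
    (hdeg : p.natDegree < ∑ q ∈ P, (q - 1)) : p = 0 := by
  nontriviality R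
  by_contra hp
  have hmonic : ∀ q ∈ P, (∑ i ∈ Finset.range q, (X : Polynomial R) ^ i).Monic :=
    fun q hq => Polynomial.monic_geom_sum_X (hne q hq)
  refine (Polynomial.monic_prod_of_monic _ _ hmonic).not_dvd_of_natDegree_lt hp ?_
    (Finset.prod_dvd_of_coprime (fun a ha b hb hab => isCoprime_geomSum _ (hcop ha hb hab)) hdvd)
  rw [Polynomial.natDegree_prod_of_monic _ _ hmonic]
  exact hdeg.trans_eq (Finset.sum_congr rfl fun q hq => (natDegree_geomSum_X (hne q hq)).symm)

theorem eq_zero_of_forall_mem_span_T_sub_one {P : Finset ℕ}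
    (hcop : (P : Set ℕ).Pairwise Nat.Coprime) (hne : ∀ q ∈ P, q ≠ 0) {a b : ℤ} {g : R[T;T⁻¹]}
    (hg : g ∈ supported R R (Set.Icc a b))
    (hmem : ∀ q ∈ P, g ∈ Ideal.span {(T q : R[T;T⁻¹]) - 1})
    (hP : (b - a).toNat < ∑ q ∈ P, (q - 1)) : g = 0 := by
  obtain ⟨p, hp, rfl⟩ := exists_T_mul_toLaurent_eq hg
  have hdvd : ∀ q ∈ P, ∑ i ∈ Finset.range q, X ^ i ∣ p := by
    intro q hq
    rw [← toLaurent_dvd_toLaurent_iff (isCoprime_self_geomSum _ (hne q hq))]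
    have hfactor : toLaurent (∑ i ∈ Finset.range q, X ^ i) ∣ (T q - 1 : R[T;T⁻¹]) := by
      rw [← Polynomial.toLaurent_X_pow, ← map_one toLaurent, ← map_sub]
      exact map_dvd _ ⟨_, (geom_sum_mul _ q).symm⟩
    exact hfactor.trans ((isUnit_T a).dvd_mul_left.1 (Ideal.mem_span_singleton.1 (hmem q hq)))
  rw [eq_zero_of_forall_geomSum_X_dvd hcop hne hdvd (hp.trans_lt hP), map_zero, mul_zero]

theorem mem_span_T_of_forall_mem_sup {P : Finset ℕ}
    (hcop : (P : Set ℕ).Pairwise Nat.Coprime) (hne : ∀ q ∈ P, q ≠ 0) {a b : ℤ}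
    (hP : (b - a).toNat < ∑ q ∈ P, (q - 1)) {m : ℕ} {S : Set ℤ} (hSab : S ⊆ Set.Icc a b)
    (hSm : Set.InjOn (Int.cast : ℤ → ZMod m) S) {f : R[T;T⁻¹]}
    (hf : f ∈ supported R R (Set.Icc a b))
    (hmem : ∀ q ∈ P, f ∈ Submodule.span R (T '' S) ⊔
      (Ideal.span {(T (q.lcm m : ℕ) : R[T;T⁻¹]) - 1}).restrictScalars R) :
    f ∈ Submodule.span R (T '' S) := by
  rw [span_T_image_eq_supported] at hmem ⊢
  obtain ⟨g, hgS, hg⟩ := exists_mem_forall_sub_mem_of_disjoint (s := P)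
    (disjoint_supported_span_T_sub_one hSm)
    (fun q _ => span_T_sub_one_le (Nat.dvd_lcm_right q m)) hmem
  have hfg : f - g = 0 := eq_zero_of_forall_mem_span_T_sub_one hcop hne
    (Submodule.sub_mem _ hf (AddMonoidAlgebra.supported_mono hSab hgS))
    (fun q hq => span_T_sub_one_le (Nat.dvd_lcm_left q m) (hg q hq)) hP
  exact sub_eq_zero.1 hfg ▸ hgS

end LaurentPolynomials

section Primes

open Filter Asymptotics

open scoped Nat.Prime

theorem sum_range_card_le_sum_of_injOn {ι : Type*} {s : Finset ι} {f : ι → ℕ}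
    (hf : Set.InjOn f s) : ∑ i ∈ Finset.range s.card, i ≤ ∑ x ∈ s, f x := by
  have hinj : Set.InjOn (fun x => (f x : ℤ)) s := Nat.cast_injective.comp_injOn hf
  have hle := Finset.sum_range_le_sum (s := s.image fun x => (f x : ℤ)) (c := 0) (by simp)
  rw [Finset.card_image_of_injOn hinj, Finset.sum_image hinj] at hle
  zify
  simpa only [zero_add] using hle

theorem primeCounting_sq_le_sum_odd_primes {n : ℕ} (hn : 4 ≤ π n) :
    π n ^ 2 ≤ 8 * ∑ q ∈ (Nat.primesLE n).erase 2, (q - 1) := by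
  set P := (Nat.primesLE n).erase 2
  have hcard : π n - 1 ≤ P.card := by
    rw [← Nat.primesLE_card_eq_primeCounting]
    exact Finset.pred_card_le_card_erase
  have hinj : Set.InjOn (fun q => q - 1) (P : Set ℕ) := fun p hp q hq hpq =>
    Nat.sub_one_cancel (Nat.prime_of_mem_primesLE (Finset.mem_of_mem_erase hp)).pos
      (Nat.prime_of_mem_primesLE (Finset.mem_of_mem_erase hq)).pos hpq
  have hsum := sum_range_card_le_sum_of_injOn hinj
  have hquad : (P.card + 1) ^ 2 ≤ 4 * (P.card * (P.card - 1)) := by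
    obtain ⟨j, hj⟩ := Nat.exists_eq_add_of_le (show 3 ≤ P.card by omega)
    rw [hj, show 3 + j - 1 = j + 2 by omega]
    nlinarith
  calc π n ^ 2 ≤ (P.card + 1) ^ 2 := by gcongr; omega
    _ ≤ 4 * ((∑ i ∈ Finset.range P.card, i) * 2) := by rwa [Finset.sum_range_id_mul_two]
    _ ≤ 8 * ∑ q ∈ P, (q - 1) := by omega

theorem div_four_mul_log_le_primeCounting {x : ℝ} (hx : 10 ≤ x) :
    x / (4 * Real.log x) ≤ π ⌊x⌋₊ := by
  have hlogx : 0 < Real.log x := Real.log_pos (by linarith)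
  have hlog : Real.log (x + 2) ≤ (x + 2) / 4 - 1 + 2 * Real.log 2 := by
    have h4 : Real.log 4 = 2 * Real.log 2 := by
      rw [show (4 : ℝ) = 2 ^ 2 by norm_num, Real.log_pow, Nat.cast_ofNat]
    have h := Real.log_le_sub_one_of_pos (show 0 < (x + 2) / 4 by linarith)
    rw [Real.log_div (by linarith) (by norm_num), h4] at h
    linarith
  refine le_trans ?_ (Chebyshev.pi_ge' (by linarith))
  rw [← div_div]
  gcongr
  nlinarith [Real.log_two_gt_d9]

theorem rpow_isLittleO_primeCounting {b : ℝ} (hb : b < 1) :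
    (fun x : ℝ => x ^ b) =o[atTop] fun x => (π ⌊x⌋₊ : ℝ) := by
  have hrpow : (fun x : ℝ => x ^ b) =o[atTop] fun x => x / Real.log x := by
    refine ((isBigO_refl (fun x : ℝ => x ^ b / Real.log x) atTop).mul_isLittleO
      (isLittleO_log_rpow_atTop (sub_pos.2 hb))).congr' ?_ ?_
    · filter_upwards [eventually_gt_atTop 1] with x hx
      exact div_mul_cancel₀ _ (Real.log_pos hx).ne'
    · filter_upwards [eventually_gt_atTop 0] with x hx
      rw [div_mul_eq_mul_div, ← Real.rpow_add hx, add_sub_cancel, Real.rpow_one]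
  refine hrpow.trans_isBigO (IsBigO.of_bound 4 ?_)
  filter_upwards [eventually_ge_atTop 10] with x hx
  have hlogx : 0 < Real.log x := Real.log_pos (by linarith)
  have h := div_four_mul_log_le_primeCounting hx
  rw [mul_comm 4, ← div_div, div_le_iff₀ (by norm_num)] at h
  rw [Real.norm_of_nonneg (by positivity), Real.norm_natCast]
  linarith

theorem rpow_isLittleO_sum_odd_primes {a : ℝ} (ha : a < 2) :
    (fun x : ℝ => x ^ a) =o[atTop]
      fun x => ((∑ q ∈ (Nat.primesLE ⌊x⌋₊).erase 2, (q - 1) : ℕ) : ℝ) := by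
  have hsq : (fun x : ℝ => x ^ a) =o[atTop] fun x => (π ⌊x⌋₊ : ℝ) ^ 2 := by
    refine ((rpow_isLittleO_primeCounting (b := a / 2) (by linarith)).pow two_pos).congr' ?_ .rfl
    filter_upwards [eventually_ge_atTop 0] with x hx
    rw [← Real.rpow_mul_natCast hx, Nat.cast_ofNat, div_mul_cancel₀ _ two_ne_zero]
  refine hsq.trans_isBigO (IsBigO.of_bound 8 ?_)
  filter_upwards [(Nat.tendsto_primeCounting.comp tendsto_nat_floor_atTop).eventually_ge_atTop 4]
    with x hx
  rw [norm_pow, Real.norm_natCast, Real.norm_natCast]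
  exact_mod_cast primeCounting_sq_le_sum_odd_primes hx

theorem exists_odd_primes_lt_rpow_and_two_mul_lt_sum {ε : ℝ} (hε : 0 < ε) :
    ∃ c : ℝ, 0 < c ∧ ∀ n : ℕ, 0 < n → ∃ P : Finset ℕ,
      (∀ q ∈ P, q.Prime ∧ Odd q ∧ (q : ℝ) < c * (n : ℝ) ^ ((1 : ℝ) / 2 + ε)) ∧
      2 * n < ∑ q ∈ P, (q - 1) := by
  have he : 0 < 1 / 2 + ε := by positivity
  obtain ⟨x₀, hx₀⟩ := eventually_atTop.1 <| (rpow_isLittleO_sum_odd_primes (a := (1 / 2 + ε)⁻¹)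
    (by rw [inv_lt_comm₀ he two_pos]; linarith)).bound (show (0 : ℝ) < 1 / 3 by norm_num)
  refine ⟨max x₀ 1 + 1, by positivity, fun n hn => ?_⟩
  have hn1 : (1 : ℝ) ≤ n := by exact_mod_cast hn
  have hpow : 1 ≤ (n : ℝ) ^ (1 / 2 + ε) := Real.one_le_rpow hn1 he.le
  set x : ℝ := max x₀ 1 * (n : ℝ) ^ (1 / 2 + ε)
  have hx₀x : x₀ ≤ x := (le_max_left _ _).trans (le_mul_of_one_le_right (by positivity) hpow)
  have hx0 : 0 ≤ x := by positivity
  refine ⟨(Nat.primesLE ⌊x⌋₊).erase 2, fun q hq => ?_, ?_⟩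
  · obtain ⟨hq2, hq⟩ := Finset.mem_erase.1 hq
    obtain ⟨hqx, hqp⟩ := Nat.mem_primesLE.1 hq
    have hqx : (q : ℝ) ≤ x := (Nat.le_floor_iff hx0).1 hqx
    exact ⟨hqp, hqp.odd_of_ne_two hq2, by linarith⟩
  · have hnx : (n : ℝ) ≤ x ^ (1 / 2 + ε)⁻¹ := by
      rw [Real.le_rpow_inv_iff_of_pos n.cast_nonneg hx0 he]
      exact le_mul_of_one_le_left (by positivity) (le_max_right _ _)
    have hsum := hx₀ x hx₀x
    rw [Real.norm_of_nonneg (by positivity), Real.norm_natCast] at hsum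
    have hlt : (2 * n : ℝ) < (∑ q ∈ (Nat.primesLE ⌊x⌋₊).erase 2, (q - 1) : ℕ) := by linarith
    exact_mod_cast hlt

end Primes

theorem stmt_19_general.{u, v} (ε : ℝ) (hε : 0 < ε) :
    ∃ c : ℝ, 0 < c ∧ ∀ (R : Type u) [CommRing R] (n : ℕ), 0 < n → ∀ (ι : Type v) (l : ι → ℤ),
      (∀ i, -(n : ℤ) ≤ l i ∧ l i ≤ (n : ℤ)) → ∀ m₀ : ℤ,
      (∀ i j, i ≠ j → ¬ (l i ≡ l j [ZMOD m₀])) →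
      ∀ f ∈ AddMonoidAlgebra.supported R R (Set.Icc (-(n : ℤ)) n),
      f ∉ Submodule.span R (Set.range fun i => (T (l i) : R[T;T⁻¹])) →
      ∃ q : ℕ, q.Prime ∧ Odd q ∧ (q : ℝ) < c * (n : ℝ) ^ ((1 : ℝ) / 2 + ε) ∧
        f ∉ Submodule.span R (Set.range fun i => (T (l i) : R[T;T⁻¹])) ⊔
          (Ideal.span {(T (Int.lcm (q : ℤ) m₀ : ℕ) : R[T;T⁻¹]) - 1}).restrictScalars R := by
  obtain ⟨c, hc, hprimes⟩ := exists_odd_primes_lt_rpow_and_two_mul_lt_sum hε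
  refine ⟨c, hc, fun R _ n hn ι l hl m₀ hmod f hf hfM => ?_⟩
  obtain ⟨P, hP, hsum⟩ := hprimes n hn
  by_contra! hmem
  have hcop : (P : Set ℕ).Pairwise Nat.Coprime := fun p hp q hq hpq =>
    (Nat.coprime_primes (hP p hp).1 (hP q hq).1).2 hpq
  have hinj : Set.InjOn (Int.cast : ℤ → ZMod m₀.natAbs) (Set.range l) := by
    rintro _ ⟨i, rfl⟩ _ ⟨j, rfl⟩ hij
    contrapose! hmod
    refine ⟨i, j, ne_of_apply_ne l hmod, ?_⟩
    rwa [← Int.modEq_natAbs, ← ZMod.intCast_eq_intCast_iff]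
  have hrange : Set.range (fun i => (T (l i) : R[T;T⁻¹])) = T '' Set.range l := Set.range_comp T l
  rw [hrange] at hfM hmem
  exact hfM <| mem_span_T_of_forall_mem_sup hcop (fun q hq => (hP q hq).1.ne_zero) (by omega)
    (Set.range_subset_iff.2 hl) hinj hf fun q hq => hmem q (hP q hq).1 (hP q hq).2.1 (hP q hq).2.2

/-- Laurent-polynomial version of Statement 18: fix `ε > 0`; there is
`c > 0` such that for `n > 0`, exponents `-n ≤ l₁ < ⋯ < l_k ≤ n` pairwise distinct
mod `m₀`, and a Laurent polynomial `f` supported in degrees `[-n, n]` with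
`f ∉ M = ℤX^{l₁} + ⋯ + ℤX^{l_k}`, there is an odd prime `q < c·n^{1/2+ε}` with
`f ∉ M + ⟨X^{lcm(q,m₀)} - 1⟩` in `ℤ[X, X⁻¹]`. -/
theorem stmt_19 (ε : ℝ) (hε : 0 < ε) :
    ∃ c : ℝ, 0 < c ∧ ∀ n : ℕ, 0 < n → ∀ (k : ℕ) (l : Fin k → ℤ),
      StrictMono l → (∀ i, -(n : ℤ) ≤ l i ∧ l i ≤ (n : ℤ)) → ∀ m₀ : ℤ,
      (∀ i j, i ≠ j → ¬ (l i ≡ l j [ZMOD m₀])) →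
      ∀ γ : ℤ → ℤ,
      (∑ i ∈ Finset.Icc (-(n : ℤ)) (n : ℤ), LaurentPolynomial.C (γ i) * T i) ∉
        Submodule.span ℤ (Set.range fun i => (T (l i) : LaurentPolynomial ℤ)) →
      ∃ q : ℕ, q.Prime ∧ Odd q ∧ (q : ℝ) < c * (n : ℝ) ^ ((1 : ℝ) / 2 + ε) ∧
        (∑ i ∈ Finset.Icc (-(n : ℤ)) (n : ℤ), LaurentPolynomial.C (γ i) * T i) ∉
          Submodule.span ℤ (Set.range fun i => (T (l i) : LaurentPolynomial ℤ)) ⊔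
            (Ideal.span {(T (Int.lcm (q : ℤ) m₀ : ℕ) : LaurentPolynomial ℤ) - 1}).restrictScalars ℤ := by
  obtain ⟨c, hc, h⟩ := stmt_19_general ε hε
  exact ⟨c, hc, fun n hn k l _ hl m₀ hmod γ =>
    h ℤ n hn (Fin k) l hl m₀ hmod _ (by simpa using sum_C_mul_T_mem_supported (.Icc (-n) n) γ)⟩
end
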